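/- arXiv:2306.07156 — 5 statements merged into one kernel-verified Lean document; each statement's English description precedes it below -/
import Mathlib

section
/- There is an absolute constant C > 0 such that for every odd prime p and every integer 0 \le k \le p-1, one has \sup_{t\in(0,1)} |\partial_t \widetilde{H}_p(k,t) - \partial_t H_p(k,t)| \le C/p and \sup_{t\in(0,1)} |\partial_t^2 \widetilde{H}_p(k,t) - \partial_t^2 H_p(k,t)| \le C/p^2. -/
/-!
The kernels `1 / x` and `2πi / (e(x) - 1)` have the same principal part at `0`, so their difference
`φ` extends smoothly to `(-1, 1)`. Since `H̃_p(k,t) - H_p(k,t)` is `p⁻¹ ∑ ((k-m)/p) φ((m-t)/p)`, a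
sum of at most `p` terms in which the arguments of `φ` stay in `[-3/4, 3/4]`, each differentiation
in `t` gains a factor `1/p`, and the `n`-th derivative is at most `p⁻ⁿ sup |φ⁽ⁿ⁾|`.
-/

open MeasureTheory Filter

noncomputable section

open scoped Classical

/-- `e(t) = e^{2π i t}`. -/
def e2 (t : ℝ) : ℂ := Complex.exp (2 * Real.pi * Complex.I * t)

/-- The summand `(e(t)-1)/(2π i (m-t))` of the random Fekete process, with the
removable singularity at `t = m` filled in by its limiting value `-1`. -/
def coefG (m : ℤ) (t : ℝ) : ℂ :=
  if t = (m : ℝ) then -1 else (e2 t - 1) / (2 * Real.pi * Complex.I * ((m : ℂ) - (t : ℂ)))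

/-- Symmetric partial sums `∑_{|m| ≤ M} (e(t)-1)/(2π i (m-t)) X(m)`. -/
def partialG {Ω : Type} (X : ℤ → Ω → ℝ) (M : ℕ) (ω : Ω) (t : ℝ) : ℂ :=
  ∑ m ∈ Finset.Icc (-(M : ℤ)) (M : ℤ), coefG m t * (X m ω : ℂ)

/-- The random process `G_X(t)`, the limit of the symmetric partial sums. -/
def GX {Ω : Type} (X : ℤ → Ω → ℝ) (ω : Ω) (t : ℝ) : ℂ :=
  limUnder Filter.atTop (fun M : ℕ => partialG X M ω t)

/-- The Fekete polynomial `F_p(z) = ∑_{n=1}^{p-1} (n/p) z^n` (Legendre symbol coefficients). -/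
def feketePoly (p : ℕ) (z : ℂ) : ℂ := ∑ n ∈ Finset.Ico 1 p, (jacobiSym (n : ℤ) p : ℂ) * z ^ n

/-- `G_p(k,t) = F_p(e((k+t)/p)) / F_p(ζ_p)`. -/
def GpFun (p k : ℕ) (t : ℝ) : ℂ :=
  feketePoly p (e2 (((k : ℝ) + t) / (p : ℝ))) / feketePoly p (e2 (1 / (p : ℝ)))

/-- The filter of natural numbers tending to infinity along the primes. -/
def primesAtTop : Filter ℕ := Filter.atTop ⊓ Filter.principal {p : ℕ | p.Prime}

end

noncomputable section

/-- `H_p(k,t) = ∑_{|m| ≤ (p-1)/2} ((k-m)/p) · 2πi/(p(e((m-t)/p)-1))`. -/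
def Hp (p k : ℕ) (t : ℝ) : ℂ :=
  ∑ m ∈ Finset.Icc (-(((p : ℤ) - 1) / 2)) (((p : ℤ) - 1) / 2),
    (jacobiSym ((k : ℤ) - m) p : ℂ) * (2 * Real.pi * Complex.I) /
      ((p : ℂ) * (e2 (((m : ℝ) - t) / (p : ℝ)) - 1))

/-- `H̃_p(k,t) = ∑_{|m| ≤ (p-1)/2} ((k-m)/p) · 1/(m-t)`. -/
def tildeHp (p k : ℕ) (t : ℝ) : ℂ :=
  ∑ m ∈ Finset.Icc (-(((p : ℤ) - 1) / 2)) (((p : ℤ) - 1) / 2),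
    (jacobiSym ((k : ℤ) - m) p : ℂ) * (1 / ((m : ℂ) - (t : ℂ)))

section GeneralCalculus

variable {𝕜 F : Type*} [NontriviallyNormedField 𝕜] [NormedAddCommGroup F] [NormedSpace 𝕜 F]

theorem iteratedDeriv_comp_const_sub_div (f : 𝕜 → F) (a b : 𝕜) (n : ℕ) (t : 𝕜) :
    iteratedDeriv n (fun s ↦ f ((a - s) / b)) t =
      (-b⁻¹) ^ n • iteratedDeriv n f ((a - t) / b) := by
  induction n generalizing t with
  | zero => simp
  | succ n ih =>
    have affine : ∀ s, (a - s) / b = -b⁻¹ * s + b⁻¹ * a := fun s ↦ by ring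
    simp only [affine] at ih ⊢
    rw [iteratedDeriv_succ, funext ih, deriv_fun_const_smul_field,
      deriv_comp_mul_left (-b⁻¹) (fun x ↦ iteratedDeriv n f (x + b⁻¹ * a)), deriv_comp_add_const,
      smul_smul, ← pow_succ, iteratedDeriv_succ]

theorem iteratedDeriv_sub_eq_of_eventuallyEq {f g h : 𝕜 → F} {n : ℕ} {t : 𝕜}
    (hf : ContDiffAt 𝕜 n f t) (hh : ContDiffAt 𝕜 n h t) (hfg : f - g =ᶠ[nhds t] h) :
    iteratedDeriv n f t - iteratedDeriv n g t = iteratedDeriv n h t := by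
  have hg : g =ᶠ[nhds t] f - h := by
    filter_upwards [hfg] with s hs
    rw [Pi.sub_apply, ← hs, Pi.sub_apply, sub_sub_cancel]
  rw [hg.iteratedDeriv_eq, iteratedDeriv_sub hf hh, sub_sub_cancel]

theorem exists_forall_norm_iteratedDeriv_le {f : 𝕜 → F} {U K : Set 𝕜} {N : ℕ}
    (hf : ContDiffOn 𝕜 N f U) (hU : IsOpen U) (hK : IsCompact K) (hKU : K ⊆ U) :
    ∃ C, 0 < C ∧ ∀ n ≤ N, ∀ x ∈ K, ‖iteratedDeriv n f x‖ ≤ C := by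
  have cont : ∀ n ≤ N, ContinuousOn (iteratedDeriv n f) U := fun n hn ↦
    (hf.continuousOn_iteratedDerivWithin (mod_cast hn) hU.uniqueDiffOn).congr
      (iteratedDerivWithin_of_isOpen hU).symm
  choose! C hC using fun n hn ↦ hK.exists_bound_of_continuousOn ((cont n hn).mono hKU)
  obtain ⟨M, hM⟩ := ((Finset.range (N + 1)).image C).bddAbove
  refine ⟨max M 1, by positivity, fun n hn x hx ↦ (hC n hn x hx).trans (le_max_of_le_left (hM ?_))⟩
  exact Finset.mem_coe.2 (Finset.mem_image_of_mem C (Finset.mem_range_succ_iff.2 hn))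

theorem norm_iteratedDeriv_sum_mul_comp_le {ι 𝔸 : Type*} [NormedDivisionRing 𝔸]
    [NormedAlgebra 𝕜 𝔸] {s : Finset ι} {c : ι → 𝔸} {a : ι → 𝕜} {b t : 𝕜} {φ : 𝕜 → 𝔸} {n : ℕ}
    {A M : ℝ} (hc : ∀ i ∈ s, ‖c i‖ ≤ A)
    (hφ : ∀ i ∈ s, ContDiffAt 𝕜 n (fun u ↦ φ ((a i - u) / b)) t)
    (hM : ∀ i ∈ s, ‖iteratedDeriv n φ ((a i - t) / b)‖ ≤ M) :
    ‖iteratedDeriv n (fun u ↦ ∑ i ∈ s, c i * φ ((a i - u) / b)) t‖ ≤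
      s.card * (A * (M / ‖b‖ ^ n)) := by
  rw [iteratedDeriv_fun_sum fun i hi ↦ contDiffAt_const.mul (hφ i hi), ← nsmul_eq_mul,
    ← Finset.sum_const]
  refine norm_sum_le_of_le s fun i hi ↦ ?_
  have hA : 0 ≤ A := (norm_nonneg _).trans (hc i hi)
  calc ‖iteratedDeriv n (fun u ↦ c i * φ ((a i - u) / b)) t‖
      = ‖c i‖ * (‖iteratedDeriv n φ ((a i - t) / b)‖ / ‖b‖ ^ n) := by
        rw [iteratedDeriv_const_mul_field, iteratedDeriv_comp_const_sub_div, norm_mul, norm_smul,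
          norm_pow, norm_neg, norm_inv, inv_pow, inv_mul_eq_div]
    _ ≤ A * (M / ‖b‖ ^ n) := by
        gcongr
        exacts [hc i hi, hM i hi]

end GeneralCalculus

theorem exists_differentiableOn_eq_inv_sub_deriv_div {f : ℂ → ℂ} {U : Set ℂ} {c : ℂ}
    (hU : U ∈ nhds c) (hf : DifferentiableOn ℂ f U) (hc : f c = 0) (hc' : deriv f c ≠ 0)
    (hne : ∀ z ∈ U, z ≠ c → f z ≠ 0) :
    ∃ Φ : ℂ → ℂ, DifferentiableOn ℂ Φ U ∧
      ∀ z ∈ U, z ≠ c → Φ z = 1 / (z - c) - deriv f c / f z := by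
  set g := dslope f c
  have hg : DifferentiableOn ℂ g U := (Complex.differentiableOn_dslope hU).2 hf
  have g_self : g c = deriv f c := dslope_same f c
  have g_of_ne : ∀ z, z ≠ c → g z = f z / (z - c) := fun z hz ↦ by
    simp only [g, dslope_of_ne f hz, slope_def_field, hc, sub_zero]
  have g_ne_zero : ∀ z ∈ U, g z ≠ 0 := fun z hz ↦ by
    obtain rfl | hzc := eq_or_ne z c
    · rwa [g_self]
    · rw [g_of_ne z hzc]
      exact div_ne_zero (hne z hz hzc) (sub_ne_zero.2 hzc)
  refine ⟨fun z ↦ dslope g c z / g z,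
    ((Complex.differentiableOn_dslope hU).2 hg).fun_div hg g_ne_zero, fun z hz hzc ↦ ?_⟩
  have hsub : z - c ≠ 0 := sub_ne_zero.2 hzc
  have hfz : f z ≠ 0 := hne z hz hzc
  simp only [dslope_of_ne g hzc, slope_def_field, g_self, g_of_ne z hzc]
  field_simp

theorem exp_two_pi_I_mul_ne_one {z : ℂ} (hz : ‖z‖ < 1) (hz0 : z ≠ 0) :
    Complex.exp (2 * Real.pi * Complex.I * z) ≠ 1 := by
  intro h
  obtain ⟨n, hn⟩ := Complex.exp_eq_one_iff.1 h
  obtain rfl : z = n := mul_left_cancel₀ Complex.two_pi_I_ne_zero (hn.trans (mul_comm _ _))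
  rw [Complex.norm_intCast] at hz
  have hn0 : n = 0 := Int.abs_lt_one_iff.1 (mod_cast hz)
  exact hz0 (by simp [hn0])

theorem exists_contDiffOn_eq_inv_sub_two_pi_I_div :
    ∃ φ : ℝ → ℂ, (∀ n : ℕ, ContDiffOn ℝ n φ (Set.Ioo (-1) 1)) ∧
      ∀ x ∈ Set.Ioo (-1 : ℝ) 1, x ≠ 0 →
        φ x = 1 / (x : ℂ) - 2 * Real.pi * Complex.I / (e2 x - 1) := by
  set f : ℂ → ℂ := fun z ↦ Complex.exp (2 * Real.pi * Complex.I * z) - 1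
  have hf : DifferentiableOn ℂ f (Metric.ball 0 1) := by fun_prop
  have hf' : deriv f 0 = 2 * Real.pi * Complex.I := by
    simpa [f] using
      (((hasDerivAt_id (0 : ℂ)).const_mul (2 * Real.pi * Complex.I)).cexp).deriv
  obtain ⟨Φ, hΦ, Φ_eq⟩ := exists_differentiableOn_eq_inv_sub_deriv_div
    (Metric.ball_mem_nhds 0 one_pos) hf (by simp [f]) (hf' ▸ Complex.two_pi_I_ne_zero)
    fun z hz hz0 ↦ sub_ne_zero.2 (exp_two_pi_I_mul_ne_one (by simpa using hz) hz0)
  have mem_ball : ∀ x ∈ Set.Ioo (-1 : ℝ) 1, (x : ℂ) ∈ Metric.ball (0 : ℂ) 1 := fun x hx ↦ by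
    simpa using abs_lt.2 hx
  refine ⟨fun x ↦ Φ x, fun n ↦ ?_, fun x hx hx0 ↦ ?_⟩
  · exact ((hΦ.contDiffOn Metric.isOpen_ball).restrict_scalars ℝ).comp
      Complex.ofRealCLM.contDiff.contDiffOn mem_ball
  · simpa only [hf', sub_zero, f, e2] using Φ_eq x (mem_ball x hx) (mod_cast hx0)

theorem intCast_sub_ne_zero (m : ℤ) {t : ℝ} (ht : t ∈ Set.Ioo (0 : ℝ) 1) : (m : ℝ) - t ≠ 0 := by
  intro h
  have hm : (m : ℝ) = t := sub_eq_zero.1 h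
  have h0 : 0 < m := by exact_mod_cast hm ▸ ht.1
  have h1 : m < 1 := by exact_mod_cast hm ▸ ht.2
  omega

section SymmetricResidues

variable {p : ℕ} {m : ℤ} {t : ℝ}

/-- The set of integers `m` with `|m| ≤ (p-1)/2` over which `H_p` and `H̃_p` are summed; for odd `p`
it is a complete system of residues modulo `p`. -/
def symmetricResidues (p : ℕ) : Finset ℤ :=
  Finset.Icc (-(((p : ℤ) - 1) / 2)) (((p : ℤ) - 1) / 2)

theorem card_symmetricResidues_le (p : ℕ) : (symmetricResidues p).card ≤ p := by
  rw [symmetricResidues, Int.card_Icc]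
  omega

theorem sub_div_mem_Icc_of_mem_symmetricResidues (hp : 1 < p) (hm : m ∈ symmetricResidues p)
    (ht : t ∈ Set.Ioo (0 : ℝ) 1) : ((m : ℝ) - t) / p ∈ Set.Icc (-(3 / 4) : ℝ) (3 / 4) := by
  rw [symmetricResidues, Finset.mem_Icc] at hm
  have hp2 : (2 : ℝ) ≤ p := by exact_mod_cast hp
  have upper : 2 * (m : ℝ) ≤ p - 1 := by exact_mod_cast (by omega : 2 * m ≤ (p : ℤ) - 1)
  have lower : -((p : ℝ) - 1) ≤ 2 * m := by exact_mod_cast (by omega : -((p : ℤ) - 1) ≤ 2 * m)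
  rw [Set.mem_Icc, le_div_iff₀ (by positivity), div_le_iff₀ (by positivity)]
  constructor <;> linarith [ht.1, ht.2]

theorem sub_div_mem_Ioo_of_mem_symmetricResidues (hp : 1 < p) (hm : m ∈ symmetricResidues p)
    (ht : t ∈ Set.Ioo (0 : ℝ) 1) : ((m : ℝ) - t) / p ∈ Set.Ioo (-1 : ℝ) 1 :=
  Set.Icc_subset_Ioo (by norm_num) (by norm_num)
    (sub_div_mem_Icc_of_mem_symmetricResidues hp hm ht)

end SymmetricResidues

theorem norm_jacobiSym_le_one (a : ℤ) (b : ℕ) : ‖(jacobiSym a b : ℂ)‖ ≤ 1 := by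
  rcases jacobiSym.trichotomy a b with h | h | h <;> simp [h]

theorem contDiffAt_tildeHp (p k n : ℕ) {t : ℝ} (ht : t ∈ Set.Ioo (0 : ℝ) 1) :
    ContDiffAt ℝ n (tildeHp p k) t := by
  unfold tildeHp
  simp only [one_div]
  refine ContDiffAt.sum fun m _ ↦ contDiffAt_const.mul (ContDiffAt.inv ?_ ?_)
  · exact contDiffAt_const.sub Complex.ofRealCLM.contDiff.contDiffAt
  · exact_mod_cast intCast_sub_ne_zero m ht

theorem tildeHp_sub_Hp_eq_sum {φ : ℝ → ℂ} {p k : ℕ} {t : ℝ} (hp : 1 < p)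
    (hφ : ∀ x ∈ Set.Ioo (-1 : ℝ) 1, x ≠ 0 →
      φ x = 1 / (x : ℂ) - 2 * Real.pi * Complex.I / (e2 x - 1))
    (ht : t ∈ Set.Ioo (0 : ℝ) 1) :
    tildeHp p k t - Hp p k t =
      ∑ m ∈ symmetricResidues p, (jacobiSym ((k : ℤ) - m) p : ℂ) / p * φ (((m : ℝ) - t) / p) := by
  rw [tildeHp, Hp, ← Finset.sum_sub_distrib]
  refine Finset.sum_congr rfl fun m hm ↦ ?_
  have hp0 : (p : ℝ) ≠ 0 := by positivity
  have hpc : (p : ℂ) ≠ 0 := mod_cast hp0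
  rw [hφ _ (sub_div_mem_Ioo_of_mem_symmetricResidues hp hm ht)
    (div_ne_zero (intCast_sub_ne_zero m ht) hp0)]
  push_cast
  field_simp

theorem derivatives_Hp_close_general (N : ℕ) :
    ∃ C : ℝ, 0 < C ∧ ∀ p : ℕ, 1 < p → ∀ k : ℕ, ∀ t ∈ Set.Ioo (0 : ℝ) 1, ∀ n ≤ N,
      ‖iteratedDeriv n (tildeHp p k) t - iteratedDeriv n (Hp p k) t‖ ≤ C / (p : ℝ) ^ n := by
  obtain ⟨φ, φ_smooth, φ_eq⟩ := exists_contDiffOn_eq_inv_sub_two_pi_I_div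
  obtain ⟨C, C_pos, hC⟩ := exists_forall_norm_iteratedDeriv_le (φ_smooth N) isOpen_Ioo
    (isCompact_Icc (a := (-(3 / 4) : ℝ)) (b := 3 / 4))
    (Set.Icc_subset_Ioo (by norm_num) (by norm_num))
  refine ⟨C, C_pos, fun p hp k t ht n hn ↦ ?_⟩
  have term_smooth : ∀ m ∈ symmetricResidues p,
      ContDiffAt ℝ n (fun s ↦ φ (((m : ℝ) - s) / p)) t := fun m hm ↦
    ((φ_smooth n).contDiffAt (isOpen_Ioo.mem_nhds
      (sub_div_mem_Ioo_of_mem_symmetricResidues hp hm ht))).comp t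
      ((contDiffAt_const.sub contDiffAt_id).div_const _)
  have coeff_le : ∀ m ∈ symmetricResidues p,
      ‖(jacobiSym ((k : ℤ) - m) p : ℂ) / p‖ ≤ 1 / p := fun m _ ↦ by
    rw [norm_div, Complex.norm_natCast]
    gcongr
    exact norm_jacobiSym_le_one _ p
  have difference_eq := iteratedDeriv_sub_eq_of_eventuallyEq (contDiffAt_tildeHp p k n ht)
    (ContDiffAt.sum fun m hm ↦ contDiffAt_const.mul (term_smooth m hm))
    (Filter.eventually_of_mem (isOpen_Ioo.mem_nhds ht) fun s hs ↦
      tildeHp_sub_Hp_eq_sum hp φ_eq hs)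
  rw [difference_eq]
  calc _ ≤ ((symmetricResidues p).card : ℝ) * (1 / p * (C / ‖(p : ℝ)‖ ^ n)) :=
        norm_iteratedDeriv_sum_mul_comp_le coeff_le term_smooth fun m hm ↦
          hC n hn _ (sub_div_mem_Icc_of_mem_symmetricResidues hp hm ht)
    _ ≤ p * (1 / p * (C / (p : ℝ) ^ n)) := by
        rw [Real.norm_natCast]
        gcongr
        exact card_symmetricResidues_le p
    _ = C / (p : ℝ) ^ n := by field_simp

/-- `H̃_p(k,·)` and `H_p(k,·)` are close in `C²`-topology on `(0,1)`:
`‖H̃_p'(k,t) - H_p'(k,t)‖ ≤ C/p` and `‖H̃_p''(k,t) - H_p''(k,t)‖ ≤ C/p²` uniformly in `t`. -/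
theorem derivatives_Hp_close :
    ∃ C : ℝ, 0 < C ∧ ∀ p : ℕ, p.Prime → Odd p → ∀ k : ℕ, k ≤ p - 1 →
      ∀ t ∈ Set.Ioo (0 : ℝ) 1,
        ‖deriv (tildeHp p k) t - deriv (Hp p k) t‖ ≤ C / p ∧
        ‖deriv (deriv (tildeHp p k)) t - deriv (deriv (Hp p k)) t‖ ≤ C / (p : ℝ) ^ 2 := by
  obtain ⟨C, C_pos, hC⟩ := derivatives_Hp_close_general 2
  refine ⟨C, C_pos, fun p hp _ k _ t ht ↦ ⟨?_, ?_⟩⟩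
  · simpa using hC p hp.one_lt k t ht 1 one_le_two
  · simpa [iteratedDeriv_succ] using hC p hp.one_lt k t ht 2 le_rfl

end
end

section
/- There exist absolute constants C > 0 and \varepsilon_0 > 0 such that for every odd prime p, every integer 0 \le k \le p-1, and every 0 < \varepsilon \le \varepsilon_0, one has |\int_0^1 \log|\widetilde{H}_p(k,t)| \mathbb{1}_{|\widetilde{H}_p(k,t)| \le \varepsilon} dt| \le C \varepsilon^{6/25}. -/
open MeasureTheory Filter

noncomputable section

/-- `H̃_p(k,t) = ∑_{|m| ≤ (p-1)/2} ((k-m)/p) · 1/(m-t)` as a real-valued function. -/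
def tildeHpR (p k : ℕ) (t : ℝ) : ℝ :=
  ∑ m ∈ Finset.Icc (-(((p : ℤ) - 1) / 2)) (((p : ℤ) - 1) / 2),
    (jacobiSym ((k : ℤ) - m) p : ℝ) / ((m : ℝ) - t)

/-!
Let `u ≤ 0 < 1 ≤ v` be the integers nearest to `(0, 1)` on either side at which the Legendre symbol
in `H̃_p(k, ·)` does not vanish; then `v - u ≤ 2`. In the derivatives of `H̃_p(k, ·)` on `(u, v)` the
terms at `u` and `v` outweigh all the others together: if their coefficients agree, they reinforce
each other in the first derivative, and `|H̃_p'| ≥ 2/3`; if not, they do so in the second, and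
`|H̃_p''| ≥ 4/3`. Van der Corput's sublevel set estimate therefore gives
`|{t : |H̃_p(k, t)| ≤ δ}| ≤ 6 √δ`, and integrating this tail bound against the logarithm yields
the sharper truncation bound `6 √ε (2 - log ε)`. The only case without such a pair is `p = 3`,
`k ≡ 1 mod 3`, where the sum has just two terms and stays away from zero.
-/

open Set

section Sublevel

/-! ### Sublevel sets -/

lemma volume_sublevel_le_of_mul_sub_le {s : Set ℝ} {f : ℝ → ℝ} {c : ℝ} (hc : 0 < c)
    (hf : ∀ x ∈ s, ∀ y ∈ s, x ≤ y → c * (y - x) ≤ f y - f x) (δ : ℝ) :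
    volume {x ∈ s | |f x| ≤ δ} ≤ ENNReal.ofReal (2 * δ / c) := by
  have sub_le : ∀ x ∈ s, |f x| ≤ δ → ∀ y ∈ s, |f y| ≤ δ → x ≤ y → y - x ≤ 2 * δ / c := by
    intro x hx hfx y hy hfy hxy
    rw [le_div_iff₀' hc]
    linarith [hf x hx y hy hxy, neg_le_of_abs_le hfx, le_of_abs_le hfy]
  refine (Real.volume_le_diam _).trans (Metric.ediam_le ?_)
  rintro x ⟨hx, hfx⟩ y ⟨hy, hfy⟩
  rw [edist_dist, Real.dist_eq]
  refine ENNReal.ofReal_le_ofReal (abs_sub_le_iff.2 ⟨?_, ?_⟩) <;> rcases le_total x y with hxy | hxy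
  · linarith [sub_le x hx hfx y hy hfy hxy]
  · exact sub_le y hy hfy x hx hfx hxy
  · exact sub_le x hx hfx y hy hfy hxy
  · linarith [sub_le y hy hfy x hx hfx hxy]

lemma mul_sub_le_sub_of_le_hasDerivAt {f f' : ℝ → ℝ} {c x y : ℝ} (hxy : x ≤ y)
    (hf : ∀ t ∈ Icc x y, HasDerivAt f (f' t) t) (hc : ∀ t ∈ Icc x y, c ≤ f' t) :
    c * (y - x) ≤ f y - f x := by
  refine (convex_Icc x y).mul_sub_le_image_sub_of_le_deriv
    (fun t ht ↦ (hf t ht).continuousAt.continuousWithinAt)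
    (fun t ht ↦ (hf t (interior_subset ht)).differentiableAt.differentiableWithinAt)
    (fun t ht ↦ ?_) x (left_mem_Icc.2 hxy) y (right_mem_Icc.2 hxy) hxy
  rw [(hf t (interior_subset ht)).deriv]
  exact hc t (interior_subset ht)

variable {s : Set ℝ} {f f' f'' : ℝ → ℝ} {c : ℝ}

lemma volume_sublevel_le_of_le_deriv (hs : s.OrdConnected) (hc : 0 < c)
    (hf : ∀ x ∈ s, HasDerivAt f (f' x) x) (hf' : ∀ x ∈ s, c ≤ f' x) (δ : ℝ) :
    volume {x ∈ s | |f x| ≤ δ} ≤ ENNReal.ofReal (2 * δ / c) :=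
  volume_sublevel_le_of_mul_sub_le hc (fun _ hx _ hy hxy ↦ mul_sub_le_sub_of_le_hasDerivAt hxy
    (fun t ht ↦ hf t (hs.out hx hy ht)) fun t ht ↦ hf' t (hs.out hx hy ht)) δ

lemma volume_sublevel_le_of_le_deriv_of_monotoneOn (hs : s.OrdConnected)
    (hf : ∀ x ∈ s, HasDerivAt f (f' x) x) (hmono : MonotoneOn f' s) (hc : 0 < c) (δ : ℝ) :
    volume {x ∈ {x ∈ s | c ≤ f' x} | |f x| ≤ δ} ≤ ENNReal.ofReal (2 * δ / c) := by
  refine volume_sublevel_le_of_mul_sub_le hc ?_ δ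
  rintro x ⟨hx, hcx⟩ y ⟨hy, -⟩ hxy
  exact mul_sub_le_sub_of_le_hasDerivAt hxy (fun t ht ↦ hf t (hs.out hx hy ht))
    fun t ht ↦ hcx.trans (hmono hx (hs.out hx hy ht) ht.1)

lemma volume_sublevel_le_of_deriv_le_of_monotoneOn (hs : s.OrdConnected)
    (hf : ∀ x ∈ s, HasDerivAt f (f' x) x) (hmono : MonotoneOn f' s) (hc : 0 < c) (δ : ℝ) :
    volume {x ∈ {x ∈ s | f' x ≤ -c} | |f x| ≤ δ} ≤ ENNReal.ofReal (2 * δ / c) := by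
  simp_rw [← abs_neg (f _)]
  refine volume_sublevel_le_of_mul_sub_le hc ?_ δ
  rintro x ⟨hx, -⟩ y ⟨hy, hcy⟩ hxy
  exact mul_sub_le_sub_of_le_hasDerivAt (f := fun t ↦ -f t) hxy
    (fun t ht ↦ (hf t (hs.out hx hy ht)).fun_neg)
    fun t ht ↦ le_neg_of_le_neg (((hmono (hs.out hx hy ht) hy ht.2)).trans hcy)

/-- **Van der Corput's sublevel set estimate** for the second derivative. -/
theorem volume_sublevel_le_of_le_deriv2 (hs : s.OrdConnected) (hc : 0 < c)
    (hf : ∀ x ∈ s, HasDerivAt f (f' x) x) (hf' : ∀ x ∈ s, HasDerivAt f' (f'' x) x)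
    (hf'' : ∀ x ∈ s, c ≤ f'' x) {δ : ℝ} (hδ : 0 < δ) :
    volume {x ∈ s | |f x| ≤ δ} ≤ ENNReal.ofReal (6 * √(δ / c)) := by
  have hmono : MonotoneOn f' s := fun x hx y hy hxy ↦ by
    have := mul_sub_le_sub_of_le_hasDerivAt hxy (fun t ht ↦ hf' t (hs.out hx hy ht))
      fun t ht ↦ hf'' t (hs.out hx hy ht)
    linarith [mul_nonneg hc.le (sub_nonneg.2 hxy)]
  set r := √(δ / c)
  have hr : 0 < r := Real.sqrt_pos.2 (by positivity)
  have hδr : δ = c * r ^ 2 := by rw [Real.sq_sqrt (by positivity)]; field_simp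
  have hη : 0 < c * r := by positivity
  have hcover : {x ∈ s | |f x| ≤ δ} ⊆ {x ∈ s | |f' x| ≤ c * r} ∪
      {x ∈ {x ∈ s | c * r ≤ f' x} | |f x| ≤ δ} ∪ {x ∈ {x ∈ s | f' x ≤ -(c * r)} | |f x| ≤ δ} := by
    rintro x ⟨hx, hfx⟩
    rcases le_total |f' x| (c * r) with h | h
    · exact .inl (.inl ⟨hx, h⟩)
    · rcases le_abs.1 h with h | h
      · exact .inl (.inr ⟨⟨hx, h⟩, hfx⟩)
      · exact .inr ⟨⟨hx, le_neg_of_le_neg h⟩, hfx⟩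
  calc volume {x ∈ s | |f x| ≤ δ}
      ≤ ENNReal.ofReal (2 * (c * r) / c) + ENNReal.ofReal (2 * δ / (c * r))
          + ENNReal.ofReal (2 * δ / (c * r)) :=
        (measure_mono hcover).trans <| (measure_union_le _ _).trans <| add_le_add
          ((measure_union_le _ _).trans <| add_le_add
            (volume_sublevel_le_of_le_deriv hs hc hf' hf'' _)
            (volume_sublevel_le_of_le_deriv_of_monotoneOn hs hf hmono hη δ))
          (volume_sublevel_le_of_deriv_le_of_monotoneOn hs hf hmono hη δ)
    _ = ENNReal.ofReal (6 * r) := by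
        rw [← ENNReal.ofReal_add (by positivity) (by positivity),
          ← ENNReal.ofReal_add (by positivity) (by positivity), hδr]
        congr 1
        field_simp
        ring

end Sublevel

section LogTruncation

/-! ### Truncated logarithmic integrals -/

lemma lintegral_Ioi_rpow_min_exp_neg {ε α : ℝ} (hε : 0 < ε) (hε1 : ε ≤ 1) (hα : 0 < α) :
    ∫⁻ x in Ioi (0 : ℝ), ENNReal.ofReal (min ε (Real.exp (-x)) ^ α) =
      ENNReal.ofReal (ε ^ α * (α⁻¹ - Real.log ε)) := by
  have hL : 0 ≤ -Real.log ε := neg_nonneg.2 (Real.log_nonpos hε.le hε1)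
  have hhead : ∫⁻ x in Ioc 0 (-Real.log ε), ENNReal.ofReal (min ε (Real.exp (-x)) ^ α) =
      ENNReal.ofReal (ε ^ α * -Real.log ε) := by
    rw [setLIntegral_congr_fun (g := fun _ ↦ ENNReal.ofReal (ε ^ α)) measurableSet_Ioc
      fun x hx ↦ ?_,
      setLIntegral_const, Real.volume_Ioc, sub_zero, ENNReal.ofReal_mul (by positivity)]
    rw [min_eq_left ((Real.log_le_iff_le_exp hε).1 (by linarith [hx.2]))]
  have htail : ∫⁻ x in Ioi (-Real.log ε), ENNReal.ofReal (min ε (Real.exp (-x)) ^ α) =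
      ENNReal.ofReal (ε ^ α * α⁻¹) := by
    rw [setLIntegral_congr_fun (g := fun x ↦ ENNReal.ofReal (Real.exp (-α * x))) measurableSet_Ioi
      fun x hx ↦ ?_, ← ofReal_integral_eq_lintegral_ofReal
        (integrableOn_exp_mul_Ioi (neg_lt_zero.2 hα) _) (ae_of_all _ fun _ ↦ (Real.exp_pos _).le),
      integral_exp_mul_Ioi (neg_lt_zero.2 hα), Real.rpow_def_of_pos hε]
    · congr 1
      field_simp
    · rw [min_eq_right ((Real.le_log_iff_exp_le hε).1 (by linarith [mem_Ioi.1 hx])), ← Real.exp_mul]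
      ring_nf
  rw [← Ioc_union_Ioi_eq_Ioi hL, lintegral_union measurableSet_Ioi Ioc_disjoint_Ioi_same, hhead,
    htail, ← ENNReal.ofReal_add (by positivity) (by positivity)]
  ring_nf

theorem abs_integral_truncated_log_norm_le {Ω E : Type*} [MeasurableSpace Ω] {μ : Measure Ω}
    [NormedAddCommGroup E] [MeasurableSpace E] [OpensMeasurableSpace E] {f : Ω → E}
    (hf : AEMeasurable f μ) {K α ε : ℝ} (hK : 0 ≤ K) (hα : 0 < α) (hε : 0 < ε) (hε1 : ε ≤ 1)
    (hμ : ∀ δ, 0 < δ → δ ≤ ε → μ {ω | ‖f ω‖ ≤ δ} ≤ ENNReal.ofReal (K * δ ^ α)) :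
    |∫ ω, (if ‖f ω‖ ≤ ε then Real.log ‖f ω‖ else 0) ∂μ| ≤
      K * (ε ^ α * (α⁻¹ - Real.log ε)) := by
  set g : Ω → ℝ := fun ω ↦ if ‖f ω‖ ≤ ε then Real.log ‖f ω‖ else 0
  have hg : AEMeasurable g μ :=
    Measurable.comp_aemeasurable (g := fun x : ℝ ↦ if x ≤ ε then Real.log x else 0)
      (Real.measurable_log.ite measurableSet_Iic measurable_const) hf.norm
  have htail : ∀ x ∈ Ioi (0 : ℝ), μ {ω | x < ‖g ω‖} ≤
      ENNReal.ofReal K * ENNReal.ofReal (min ε (Real.exp (-x)) ^ α) := by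
    intro x hx
    rw [← ENNReal.ofReal_mul hK]
    refine (measure_mono fun ω hω ↦ ?_).trans
      (hμ _ (lt_min hε (Real.exp_pos _)) (min_le_left _ _))
    by_cases h : ‖f ω‖ ≤ ε
    · have hlog : x < -Real.log ‖f ω‖ := by
        simpa only [mem_ofPred_eq, g, if_pos h, Real.norm_of_nonpos
          (Real.log_nonpos (norm_nonneg _) (h.trans hε1))] using hω
      exact le_min h (Real.le_exp_of_log_le (by linarith))
    · simp only [mem_ofPred_eq, g, if_neg h, norm_zero] at hω
      exact absurd hω hx.not_gt
  have hbound : ∫⁻ ω, ENNReal.ofReal ‖g ω‖ ∂μ ≤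
      ENNReal.ofReal (K * (ε ^ α * (α⁻¹ - Real.log ε))) := by
    rw [lintegral_eq_lintegral_meas_lt μ (ae_of_all _ fun _ ↦ norm_nonneg _) hg.norm]
    refine (setLIntegral_mono' measurableSet_Ioi htail).trans_eq ?_
    rw [lintegral_const_mul _ (by fun_prop), lintegral_Ioi_rpow_min_exp_neg hε hε1 hα,
      ← ENNReal.ofReal_mul hK]
  have hpos : 0 ≤ α⁻¹ - Real.log ε := by
    linarith [inv_pos.2 hα, Real.log_nonpos hε.le hε1]
  exact (norm_integral_le_lintegral_norm g).trans
    (ENNReal.toReal_le_of_le_ofReal (by positivity) hbound)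

lemma rpow_mul_sub_log_le {x s α b : ℝ} (hx : 0 < x) (hx1 : x ≤ 1) (hb : 0 ≤ b) (hsα : s < α) :
    x ^ α * (b - Real.log x) ≤ (b + (α - s)⁻¹) * x ^ s := by
  have hlog : -Real.log x ≤ x ^ (s - α) * (α - s)⁻¹ := by
    have := Real.log_le_rpow_div (inv_nonneg.2 hx.le) (sub_pos.2 hsα)
    rwa [Real.log_inv, Real.inv_rpow hx.le, ← Real.rpow_neg hx.le, neg_sub, div_eq_mul_inv] at this
  calc x ^ α * (b - Real.log x) = b * x ^ α + x ^ α * -Real.log x := by ring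
    _ ≤ b * x ^ s + x ^ α * (x ^ (s - α) * (α - s)⁻¹) := by
        gcongr b * ?_ + _ * ?_
        · exact Real.rpow_le_rpow_of_exponent_ge hx hx1 hsα.le
    _ = (b + (α - s)⁻¹) * x ^ s := by
        rw [← mul_assoc, ← Real.rpow_add hx, add_sub_cancel]
        ring

end LogTruncation

section PoleSum

/-! ### Sums of poles at the integers -/

/-- The sum `∑_{m ∈ S} a_m / (m - t)^n` of poles of order `n` at integer points. For `n = 1` it has
the shape of `H̃_p`, and differentiation raises `n`. A pole with `m = t` contributes `0` when
`n ≠ 0`. -/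
def poleSum (S : Finset ℤ) (a : ℤ → ℝ) (n : ℕ) (t : ℝ) : ℝ :=
  ∑ m ∈ S, a m / ((m : ℝ) - t) ^ n

lemma tildeHpR_eq_poleSum (p k : ℕ) :
    tildeHpR p k = poleSum (Finset.Icc (-(((p : ℤ) - 1) / 2)) (((p : ℤ) - 1) / 2))
      (fun m ↦ (jacobiSym ((k : ℤ) - m) p : ℝ)) 1 := by
  ext t
  simp only [tildeHpR, poleSum, pow_one]

lemma measurable_poleSum (S : Finset ℤ) (a : ℤ → ℝ) (n : ℕ) : Measurable (poleSum S a n) := by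
  unfold poleSum
  fun_prop

lemma poleSum_neg (S : Finset ℤ) (a : ℤ → ℝ) (n : ℕ) (t : ℝ) :
    poleSum S (-a) n t = -poleSum S a n t := by
  simp only [poleSum, Pi.neg_apply, neg_div, Finset.sum_neg_distrib]

lemma hasDerivAt_poleSum {S : Finset ℤ} {a : ℤ → ℝ} {t : ℝ}
    (ht : ∀ m ∈ S, a m ≠ 0 → (m : ℝ) ≠ t) (n : ℕ) :
    HasDerivAt (poleSum S a n) (n * poleSum S a (n + 1) t) t := by
  unfold poleSum
  rw [Finset.mul_sum]
  refine HasDerivAt.fun_sum fun m hm ↦ ?_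
  by_cases ham : a m = 0
  · simpa [ham] using hasDerivAt_const t (0 : ℝ)
  have hmt : (m : ℝ) - t ≠ 0 := sub_ne_zero.2 (ht m hm ham)
  refine ((((hasDerivAt_id t).const_sub (m : ℝ)).fun_pow n).fun_inv (pow_ne_zero n hmt)
    |>.const_mul (a m)).congr_deriv ?_
  rcases n with - | n
  · simp
  · simp only [id, Nat.add_sub_cancel]
    field_simp
    ring

lemma sum_range_one_div_sq_le {x : ℝ} (hx : 1 / 2 < x) (n : ℕ) :
    ∑ i ∈ Finset.range n, 1 / (x + i) ^ 2 ≤ 1 / (x - 1 / 2) := by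
  have hterm : ∀ i : ℕ,
      1 / (x + i) ^ 2 ≤ 1 / (x + i - 1 / 2) - 1 / (x + (i + 1 : ℕ) - 1 / 2) := by
    intro i
    have hi : 0 < x + i - 1 / 2 := by linarith [i.cast_nonneg (α := ℝ)]
    have hi' : 0 < x + i + 1 / 2 := by linarith
    rw [show x + (i + 1 : ℕ) - 1 / 2 = x + i + 1 / 2 by push_cast; ring,
      div_sub_div _ _ hi.ne' hi'.ne', show 1 * (x + i + 1 / 2) - (x + i - 1 / 2) * 1 = 1 by ring]
    exact one_div_le_one_div_of_le (by positivity) (by nlinarith)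
  calc ∑ i ∈ Finset.range n, 1 / (x + i) ^ 2
      ≤ 1 / (x + (0 : ℕ) - 1 / 2) - 1 / (x + n - 1 / 2) :=
        (Finset.sum_le_sum fun i _ ↦ hterm i).trans_eq
          (Finset.sum_range_sub' (fun i : ℕ ↦ 1 / (x + i - 1 / 2)) n)
    _ ≤ 1 / (x - 1 / 2) := by
        have : 0 < 1 / (x + n - 1 / 2) := one_div_pos.2 (by linarith [n.cast_nonneg (α := ℝ)])
        rw [Nat.cast_zero, add_zero]
        linarith

lemma sum_one_div_sub_sq_le_of_lt {T : Finset ℤ} {v : ℤ} {t : ℝ} (hT : ∀ m ∈ T, v < m)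
    (ht : t < v) : ∑ m ∈ T, 1 / ((m : ℝ) - t) ^ 2 ≤ 1 / (v - t + 1 / 2) := by
  have hcast : ∀ m ∈ T, (((m - (v + 1)).toNat : ℤ) : ℝ) = m - (v + 1) := by
    intro m hm
    rw [Int.toNat_of_nonneg (by linarith [hT m hm])]
    push_cast
    ring
  have hinj : InjOn (fun m : ℤ ↦ (m - (v + 1)).toNat) T := by
    intro m hm m' hm' h
    have := hT m hm
    have := hT m' hm'
    simp only at h
    omega
  set I := T.image fun m ↦ (m - (v + 1)).toNat
  calc ∑ m ∈ T, 1 / ((m : ℝ) - t) ^ 2 = ∑ i ∈ I, 1 / (v + 1 - t + i) ^ 2 := by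
        rw [Finset.sum_image hinj]
        refine Finset.sum_congr rfl fun m hm ↦ ?_
        rw [← Int.cast_natCast, hcast m hm]
        ring_nf
    _ ≤ ∑ i ∈ Finset.range (I.sup id).succ, 1 / (v + 1 - t + i) ^ 2 :=
        Finset.sum_le_sum_of_subset_of_nonneg I.subset_range_sup_succ fun _ _ _ ↦ by positivity
    _ ≤ 1 / (v - t + 1 / 2) :=
        (sum_range_one_div_sq_le (by linarith) _).trans_eq (by ring_nf)

lemma abs_poleSum_le_sum_one_div_sq {T : Finset ℤ} {a : ℤ → ℝ} {n : ℕ} {t : ℝ} (hn : 2 ≤ n)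
    (ha : ∀ m, |a m| ≤ 1) (hT : ∀ m ∈ T, 1 ≤ |(m : ℝ) - t|) :
    |poleSum T a n t| ≤ ∑ m ∈ T, 1 / ((m : ℝ) - t) ^ 2 := by
  refine (Finset.abs_sum_le_sum_abs _ _).trans (Finset.sum_le_sum fun m hm ↦ ?_)
  have hpos : 0 < |(m : ℝ) - t| := zero_lt_one.trans_le (hT m hm)
  rw [abs_div, abs_pow, ← sq_abs ((m : ℝ) - t)]
  exact div_le_div₀ zero_le_one (ha m) (by positivity) (pow_le_pow_right₀ (hT m hm) hn)

lemma abs_poleSum_le_of_lt {T : Finset ℤ} {a : ℤ → ℝ} {n : ℕ} {v : ℤ} {t : ℝ} (hn : 2 ≤ n)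
    (ha : ∀ m, |a m| ≤ 1) (hT : ∀ m ∈ T, v < m) (ht : t < v) :
    |poleSum T a n t| ≤ 1 / (v - t + 1 / 2) := by
  refine (abs_poleSum_le_sum_one_div_sq hn ha fun m hm ↦ ?_).trans
    (sum_one_div_sub_sq_le_of_lt hT ht)
  have : (v : ℝ) + 1 ≤ m := by exact_mod_cast hT m hm
  exact (by linarith : 1 ≤ (m : ℝ) - t).trans (le_abs_self _)

lemma poleSum_reflect (T : Finset ℤ) (a : ℤ → ℝ) (n : ℕ) (t : ℝ) :
    poleSum (T.image Neg.neg) (fun m ↦ a (-m)) n (-t) = (-1) ^ n * poleSum T a n t := by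
  unfold poleSum
  rw [Finset.sum_image neg_injective.injOn, Finset.mul_sum]
  refine Finset.sum_congr rfl fun m _ ↦ ?_
  beta_reduce
  rw [neg_neg, Int.cast_neg, show -(m : ℝ) - -t = -1 * (m - t) by ring, mul_pow, ← div_div,
    div_eq_mul_inv (a m) ((-1) ^ n), ← inv_pow, inv_neg_one]
  ring

lemma abs_poleSum_le_of_gt {T : Finset ℤ} {a : ℤ → ℝ} {n : ℕ} {u : ℤ} {t : ℝ} (hn : 2 ≤ n)
    (ha : ∀ m, |a m| ≤ 1) (hT : ∀ m ∈ T, m < u) (ht : u < t) :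
    |poleSum T a n t| ≤ 1 / (t - u + 1 / 2) := by
  have hT' : ∀ m ∈ T.image Neg.neg, -u < m := by
    simp only [Finset.mem_image, forall_exists_index, and_imp, forall_apply_eq_imp_iff₂]
    exact fun m hm ↦ neg_lt_neg (hT m hm)
  have := abs_poleSum_le_of_lt (t := -t) hn (fun m ↦ ha (-m)) hT' (by push_cast; linarith)
  rw [poleSum_reflect, abs_mul, abs_neg_one_pow, one_mul] at this
  convert this using 2
  push_cast
  ring

/- The left-hand side is the tangent of the right-hand side at `x = 1`. Added up at `x = t - u` and
`x = v - t` with `v - u ≤ 2`, it bounds the poles at `u` and `v` minus the two tails by `2 / 3`. -/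
lemma tangent_le_one_div_pow_sub {x : ℝ} (hx : 0 < x) {n : ℕ} (hn : 1 ≤ n) :
    1 / 3 - (n - 4 / 9) * (x - 1) ≤ 1 / x ^ n - 1 / (x + 1 / 2) := by
  induction n, hn using Nat.le_induction with
  | base =>
    have : 1 / x ^ 1 - 1 / (x + 1 / 2) - (1 / 3 - ((1 : ℕ) - 4 / 9) * (x - 1)) =
        (x - 1) ^ 2 * (5 / 9 * x + 1 / 2) / (x * (x + 1 / 2)) := by
      field_simp
      push_cast
      ring
    rw [← sub_nonneg, this]
    positivity
  | succ n _ ih =>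
    have hstep : 1 / x ^ n - (x - 1) ≤ 1 / x ^ (n + 1) := by
      have : 1 / x ^ (n + 1) - 1 / x ^ n + (x - 1) = (x - 1) * (x ^ (n + 1) - 1) / x ^ (n + 1) := by
        field_simp
        ring
      have hsign : 0 ≤ (x - 1) * (x ^ (n + 1) - 1) := by
        rcases le_total 1 x with h | h
        · exact mul_nonneg (sub_nonneg.2 h) (sub_nonneg.2 (one_le_pow₀ h))
        · exact mul_nonneg_of_nonpos_of_nonpos (sub_nonpos.2 h)
            (sub_nonpos.2 (pow_le_one₀ hx.le h))
      have := div_nonneg hsign (pow_pos hx (n + 1)).le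
      linarith
    push_cast
    linarith

end PoleSum

section UnitGap

/-! ### Gaps between unit coefficients -/

/-- The coefficients `a` are bounded by `1`, and `u < v` are points of `S` at distance at most `2`
whose coefficients are `±1`, with only vanishing coefficients strictly in between. In `H̃_p` such a
gap is either a pair of consecutive integers or surrounds the zero of the Legendre symbol. -/
structure IsUnitGap (S : Finset ℤ) (a : ℤ → ℝ) (u v : ℤ) : Prop where
  abs_le_one : ∀ m, |a m| ≤ 1
  lt : u < v
  le_add_two : v ≤ u + 2
  left_mem : u ∈ S
  right_mem : v ∈ S
  abs_left : |a u| = 1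
  abs_right : |a v| = 1
  eq_zero : ∀ m, u < m → m < v → a m = 0

variable {S : Finset ℤ} {a : ℤ → ℝ} {u v : ℤ}

lemma IsUnitGap.neg (h : IsUnitGap S a u v) : IsUnitGap S (-a) u v where
  __ := h
  abs_le_one m := by simpa using h.abs_le_one m
  abs_left := by simpa using h.abs_left
  abs_right := by simpa using h.abs_right
  eq_zero m hum hmv := by simpa using h.eq_zero m hum hmv

lemma sum_eq_add_add_sum_filter {ι M : Type*} [LinearOrder ι] [AddCommMonoid M] {S : Finset ι}
    {b : ι → M} {u v : ι} (hu : u ∈ S) (hv : v ∈ S) (huv : u < v)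
    (hb : ∀ m, u < m → m < v → b m = 0) :
    ∑ m ∈ S, b m = b u + b v + ∑ m ∈ S with m < u, b m + ∑ m ∈ S with v < m, b m := by
  have hpt : ∀ m, b m = (if m = u then b m else 0) + (if m = v then b m else 0) +
      (if m < u then b m else 0) + (if v < m then b m else 0) := by
    intro m
    rcases lt_trichotomy m u with hm | rfl | hm
    · simp [hm, hm.ne, (hm.trans huv).ne, (hm.trans huv).not_gt]
    · simp [huv.ne, huv.not_gt]
    · rcases lt_trichotomy m v with hm' | rfl | hm'
      · simp [hb m hm hm']
      · simp [huv.ne', huv.not_gt]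
      · simp [hm', hm'.ne', hm.ne', hm.not_gt]
  rw [Finset.sum_congr rfl fun m _ ↦ hpt m]
  simp only [Finset.sum_add_distrib, Finset.sum_ite_eq', hu, hv, if_true, Finset.sum_filter]

lemma IsUnitGap.two_thirds_le_poleSum (h : IsUnitGap S a u v) {n : ℕ} (hn : 2 ≤ n)
    (hau : a u = (-1) ^ n) (hav : a v = 1) {t : ℝ} (ht : t ∈ Ioo (u : ℝ) v) :
    2 / 3 ≤ poleSum S a n t := by
  have hsplit : poleSum S a n t = 1 / (t - u) ^ n + 1 / (v - t) ^ n +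
      poleSum {m ∈ S | m < u} a n t + poleSum {m ∈ S | v < m} a n t := by
    unfold poleSum
    rw [sum_eq_add_add_sum_filter h.left_mem h.right_mem h.lt
      fun m hum hmv ↦ by rw [h.eq_zero m hum hmv, zero_div], hau, hav,
      show (u : ℝ) - t = -1 * (t - u) by ring, mul_pow, ← div_div, div_self (by simp)]
  have hleft := neg_le_of_abs_le <| abs_poleSum_le_of_gt (T := {m ∈ S | m < u}) hn h.abs_le_one
    (fun m hm ↦ (Finset.mem_filter.1 hm).2) ht.1
  have hright := neg_le_of_abs_le <| abs_poleSum_le_of_lt (T := {m ∈ S | v < m}) hn h.abs_le_one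
    (fun m hm ↦ (Finset.mem_filter.1 hm).2) ht.2
  have hu := tangent_le_one_div_pow_sub (sub_pos.2 ht.1) (one_le_two.trans hn)
  have hv := tangent_le_one_div_pow_sub (sub_pos.2 ht.2) (one_le_two.trans hn)
  have hgap : (v : ℝ) ≤ u + 2 := by exact_mod_cast h.le_add_two
  have hslope : ((n : ℝ) - 4 / 9) * ((t - u - 1) + (v - t - 1)) ≤ 0 := by
    have : (2 : ℝ) ≤ n := by exact_mod_cast hn
    exact mul_nonpos_of_nonneg_of_nonpos (by linarith) (by linarith)
  linarith

lemma IsUnitGap.hasDerivAt_poleSum (h : IsUnitGap S a u v) {t : ℝ} (ht : t ∈ Ioo (u : ℝ) v)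
    (n : ℕ) : HasDerivAt (poleSum S a n) (n * poleSum S a (n + 1) t) t := by
  refine _root_.hasDerivAt_poleSum (fun m _ ham hmt ↦ ham (h.eq_zero m ?_ ?_)) n
  · exact_mod_cast hmt ▸ ht.1
  · exact_mod_cast hmt ▸ ht.2

theorem IsUnitGap.volume_sublevel_poleSum_le (h : IsUnitGap S a u v) {δ : ℝ} (hδ : 0 < δ)
    (hδ1 : δ ≤ 1) :
    volume {t ∈ Ioo (u : ℝ) v | |poleSum S a 1 t| ≤ δ} ≤ ENNReal.ofReal (6 * √δ) := by
  wlog hav : a v = 1 generalizing a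
  · have hav' : (-a) v = 1 := by
      simpa [neg_eq_iff_eq_neg] using ((abs_eq zero_le_one).1 h.abs_right).resolve_left hav
    simpa only [poleSum_neg, abs_neg] using this h.neg hav'
  have hderiv : ∀ t ∈ Ioo (u : ℝ) v, HasDerivAt (poleSum S a 1) (poleSum S a 2 t) t :=
    fun t ht ↦ by simpa using h.hasDerivAt_poleSum ht 1
  rcases (abs_eq zero_le_one).1 h.abs_left with hau | hau
  · have hslope : ∀ t ∈ Ioo (u : ℝ) v, 2 / 3 ≤ poleSum S a 2 t :=
      fun t ht ↦ h.two_thirds_le_poleSum le_rfl (by simpa using hau) hav ht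
    refine (volume_sublevel_le_of_le_deriv ordConnected_Ioo (by norm_num) hderiv hslope δ).trans
      (ENNReal.ofReal_le_ofReal ?_)
    linarith [Real.sqrt_nonneg δ, Real.le_sqrt_of_sq_le (by nlinarith : δ ^ 2 ≤ δ)]
  · have hderiv2 : ∀ t ∈ Ioo (u : ℝ) v, HasDerivAt (poleSum S a 2) (2 * poleSum S a 3 t) t :=
      fun t ht ↦ by simpa using h.hasDerivAt_poleSum ht 2
    have hconvex : ∀ t ∈ Ioo (u : ℝ) v, 1 ≤ 2 * poleSum S a 3 t := fun t ht ↦ by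
      linarith [h.two_thirds_le_poleSum (n := 3) (by norm_num) (by rw [hau]; norm_num) hav ht]
    simpa only [div_one] using
      volume_sublevel_le_of_le_deriv2 ordConnected_Ioo one_pos hderiv hderiv2 hconvex hδ

end UnitGap

section LegendreSymbol

/-! ### Legendre symbol coefficients -/

lemma abs_jacobiSym_le_one (x : ℤ) (n : ℕ) : |(jacobiSym x n : ℝ)| ≤ 1 := by
  rcases jacobiSym.trichotomy x n with h | h | h <;> simp [h]

variable {p : ℕ}

lemma abs_jacobiSym_eq_one (hp : p.Prime) {x : ℤ} (hx : ¬(p : ℤ) ∣ x) :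
    |(jacobiSym x p : ℝ)| = 1 := by
  have : Fact p.Prime := ⟨hp⟩
  rw [← ZMod.intCast_zmod_eq_zero_iff_dvd] at hx
  rw [← jacobiSym.legendreSym.to_jacobiSym]
  rcases legendreSym.eq_one_or_neg_one p hx with h | h <;> simp [h]

lemma jacobiSym_eq_zero (hp : p.Prime) {x : ℤ} (hx : (p : ℤ) ∣ x) : jacobiSym x p = 0 := by
  rw [jacobiSym.mod_left, Int.emod_eq_zero_of_dvd hx, jacobiSym.zero_left hp.one_lt]

lemma isUnitGap_jacobiSym (hp : p.Prime) {S : Finset ℤ} {k u v : ℤ} (huv : u < v)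
    (hvu : v ≤ u + 2) (huS : u ∈ S) (hvS : v ∈ S) (hu : ¬(p : ℤ) ∣ k - u) (hv : ¬(p : ℤ) ∣ k - v)
    (hbetween : ∀ m, u < m → m < v → (p : ℤ) ∣ k - m) :
    IsUnitGap S (fun m ↦ (jacobiSym (k - m) p : ℝ)) u v where
  abs_le_one _ := abs_jacobiSym_le_one _ _
  lt := huv
  le_add_two := hvu
  left_mem := huS
  right_mem := hvS
  abs_left := abs_jacobiSym_eq_one hp hu
  abs_right := abs_jacobiSym_eq_one hp hv
  eq_zero m hum hmv := by rw [jacobiSym_eq_zero hp (hbetween m hum hmv), Int.cast_zero]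

lemma exists_isUnitGap_jacobiSym (hp : p.Prime) (hodd : Odd p) {k : ℤ}
    (hpk : p = 3 → ¬(p : ℤ) ∣ k - 1) :
    ∃ u v : ℤ, u ≤ 0 ∧ 1 ≤ v ∧
      IsUnitGap (Finset.Icc (-(((p : ℤ) - 1) / 2)) (((p : ℤ) - 1) / 2))
        (fun m ↦ (jacobiSym (k - m) p : ℝ)) u v := by
  obtain ⟨M, hM⟩ := hodd
  have hp3 : 3 ≤ p := by have := hp.two_le; omega
  have hp1 : ¬(p : ℤ) ∣ 1 := fun h ↦ by linarith [Int.le_of_dvd one_pos h]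
  by_cases h0 : (p : ℤ) ∣ k
  · refine ⟨-1, 1, by norm_num, le_rfl, isUnitGap_jacobiSym hp (by norm_num) (by norm_num)
      (Finset.mem_Icc.2 (by omega)) (Finset.mem_Icc.2 (by omega)) ?_ ?_ fun m hum hmv ↦ ?_⟩
    · rwa [sub_neg_eq_add, dvd_add_right h0]
    · rwa [dvd_sub_right h0]
    · rwa [show m = 0 by omega, sub_zero]
  by_cases h1 : (p : ℤ) ∣ k - 1
  · have hp_ne : p ≠ 3 := fun h ↦ hpk h h1
    refine ⟨0, 2, le_rfl, by norm_num, isUnitGap_jacobiSym hp (by norm_num) (by norm_num)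
      (Finset.mem_Icc.2 (by omega)) (Finset.mem_Icc.2 (by omega)) (by rwa [sub_zero]) ?_
      fun m hum hmv ↦ ?_⟩
    · rwa [show k - 2 = k - 1 - 1 by ring, dvd_sub_right h1]
    · rwa [show m = 1 by omega]
  · exact ⟨0, 1, le_rfl, le_rfl, isUnitGap_jacobiSym hp (by norm_num) (by norm_num)
      (Finset.mem_Icc.2 (by omega)) (Finset.mem_Icc.2 (by omega)) (by rwa [sub_zero]) h1
      fun m hum hmv ↦ by omega⟩

lemma half_lt_abs_tildeHpR_three {k : ℕ} (hk : (3 : ℤ) ∣ k - 1) {t : ℝ} (ht : t ∈ Ioo (0 : ℝ) 1) :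
    1 / 2 < |tildeHpR 3 k t| := by
  obtain ⟨ht0, ht1⟩ := ht
  have hS : Finset.Icc (-((((3 : ℕ) : ℤ) - 1) / 2)) ((((3 : ℕ) : ℤ) - 1) / 2) = {-1, 0, 1} := by
    decide
  have hzero : jacobiSym ((k : ℤ) - 1) 3 = 0 := jacobiSym_eq_zero Nat.prime_three hk
  have hunit : |(jacobiSym k 3 : ℝ)| = 1 :=
    abs_jacobiSym_eq_one Nat.prime_three fun h ↦ by push_cast at h; omega
  have htilde : tildeHpR 3 k t =
      -(jacobiSym k 3 / t + jacobiSym ((k : ℤ) + 1) 3 / (1 + t)) := by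
    have hleft : -1 - t ≠ 0 := by linarith
    have hleft' : 1 + t ≠ 0 := by linarith
    have hmid : t ≠ 0 := ht0.ne'
    rw [tildeHpR, hS, Finset.sum_insert (by decide), Finset.sum_insert (by decide),
      Finset.sum_singleton, hzero, sub_neg_eq_add, sub_zero]
    push_cast
    field_simp
    ring
  calc (1 / 2 : ℝ) < 1 / t - 1 / (1 + t) := by
        rw [div_sub_div _ _ ht0.ne' (by linarith), div_lt_div_iff₀ two_pos (by positivity)]
        nlinarith
    _ ≤ |jacobiSym k 3 / t| - |jacobiSym ((k : ℤ) + 1) 3 / (1 + t)| := by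
        rw [abs_div, abs_div, hunit, abs_of_pos ht0, abs_of_pos (by linarith : 0 < 1 + t)]
        gcongr
        exact abs_jacobiSym_le_one _ _
    _ ≤ |tildeHpR 3 k t| := by
        rw [htilde, abs_neg]
        simpa only [sub_neg_eq_add, abs_neg] using abs_sub_abs_le_abs_sub
          (jacobiSym k 3 / t : ℝ) (-(jacobiSym ((k : ℤ) + 1) 3 / (1 + t)))

theorem volume_sublevel_tildeHpR_le (hp : p.Prime) (hodd : Odd p) (k : ℕ) {δ : ℝ} (hδ : 0 < δ)
    (hδ1 : δ ≤ 1) :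
    volume {t ∈ Ioo (0 : ℝ) 1 | |tildeHpR p k t| ≤ δ} ≤ ENNReal.ofReal (6 * √δ) := by
  by_cases hexc : p = 3 ∧ (p : ℤ) ∣ k - 1
  · obtain ⟨rfl, hk⟩ := hexc
    rcases le_total δ (1 / 2) with hδ2 | hδ2
    · rw [show {t ∈ Ioo (0 : ℝ) 1 | |tildeHpR 3 k t| ≤ δ} = ∅ from
        eq_empty_of_forall_notMem fun t ⟨ht, htδ⟩ ↦
          ((half_lt_abs_tildeHpR_three hk ht).trans_le (htδ.trans hδ2)).false, measure_empty]
      exact zero_le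
    · refine (measure_mono (sep_subset _ _)).trans ?_
      rw [Real.volume_Ioo]
      exact ENNReal.ofReal_le_ofReal
        (by linarith [Real.le_sqrt_of_sq_le (by nlinarith : δ ^ 2 ≤ δ)])
  · obtain ⟨u, v, hu, hv, h⟩ := exists_isUnitGap_jacobiSym hp hodd fun hp3 hk ↦ hexc ⟨hp3, hk⟩
    rw [tildeHpR_eq_poleSum]
    refine (measure_mono ?_).trans (h.volume_sublevel_poleSum_le hδ hδ1)
    exact fun t ht ↦
      ⟨Ioo_subset_Ioo (by exact_mod_cast hu) (by exact_mod_cast hv) ht.1, ht.2⟩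

end LegendreSymbol

theorem log_truncation_tildeHp_general {p : ℕ} (hp : p.Prime) (hodd : Odd p) (k : ℕ) {ε : ℝ}
    (hε : 0 < ε) (hε1 : ε ≤ 1) :
    |∫ t in (0 : ℝ)..1, (if |tildeHpR p k t| ≤ ε then Real.log |tildeHpR p k t| else 0)| ≤
      6 * (√ε * (2 - Real.log ε)) := by
  have hmeas : Measurable (tildeHpR p k) := tildeHpR_eq_poleSum p k ▸ measurable_poleSum _ _ _
  have hsublevel : ∀ δ : ℝ, 0 < δ → δ ≤ ε →
      volume.restrict (Ioo (0 : ℝ) 1) {t | ‖tildeHpR p k t‖ ≤ δ} ≤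
        ENNReal.ofReal (6 * δ ^ (1 / 2 : ℝ)) := by
    intro δ hδ hδε
    rw [Measure.restrict_apply' measurableSet_Ioo, inter_comm, ← Real.sqrt_eq_rpow]
    exact volume_sublevel_tildeHpR_le hp hodd k hδ (hδε.trans hε1)
  rw [intervalIntegral.integral_of_le zero_le_one, integral_Ioc_eq_integral_Ioo,
    Real.sqrt_eq_rpow]
  simpa only [one_div, inv_inv, Real.norm_eq_abs] using
    abs_integral_truncated_log_norm_le hmeas.aemeasurable (by norm_num) one_half_pos hε hε1
      hsublevel

/-- The truncated logarithmic integral of `H̃_p(k,·)` is small: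
`|∫_0^1 log|H̃_p(k,t)| 1_{|H̃_p(k,t)| ≤ ε} dt| ≤ C ε^{6/25}`. -/
theorem log_truncation_tildeHp :
    ∃ C : ℝ, 0 < C ∧ ∃ ε₀ : ℝ, 0 < ε₀ ∧
      ∀ p : ℕ, p.Prime → Odd p → ∀ k : ℕ, k ≤ p - 1 →
      ∀ ε : ℝ, 0 < ε → ε ≤ ε₀ →
        |∫ t in (0 : ℝ)..1,
            (if |tildeHpR p k t| ≤ ε then Real.log |tildeHpR p k t| else 0)|
          ≤ C * ε ^ ((6 : ℝ) / 25) := by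
  refine ⟨6 * (2 + (1 / 2 - 6 / 25)⁻¹), by norm_num, 1, one_pos,
    fun p hp hodd k _ ε hε hε1 ↦ (log_truncation_tildeHp_general hp hodd k hε hε1).trans ?_⟩
  rw [mul_assoc, Real.sqrt_eq_rpow]
  gcongr 6 * ?_
  exact rpow_mul_sub_log_le hε hε1 zero_le_two (by norm_num)

end
end

section
/- There is an absolute constant C > 0 such that for every odd prime p, (1/p) \sum_{k=0}^{p-1} \big( \sum_{1 \le |m| \le (p-1)/2} ((k-m)/p) \cdot 1/m \big)^2 \le C. -/
open scoped Classical

noncomputable section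

/-!
For a nontrivial multiplicative character `χ` of a finite field with `q` elements, an affine change
of variable turns `∑ x, χ (x - a) * χ⁻¹ (x - b)` with `a ≠ b` into the Jacobi sum
`J(χ, χ⁻¹) = -χ (-1)`, so the correlation of two translates of `χ` is `q - 1` on the diagonal and
`-1` off it. Expanding the square, a combination `∑ w i χ (x - a i)` of distinct translates of a
quadratic `χ` has second moment `q ∑ w i ^ 2 - (∑ w i) ^ 2 ≤ q ∑ w i ^ 2`. The shifts `m` with
`|m| ≤ (p - 1) / 2` are distinct modulo `p`, and `∑ 1 / m ^ 2` converges.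
-/

section MulChar

variable {F R : Type*} [Field F] [CommRing R]

theorem mulChar_mul_inv_mulChar_of_ne_zero (χ : MulChar F R) {x : F} (hx : x ≠ 0) :
    χ x * χ⁻¹ x = 1 := by
  rw [← MulChar.mul_apply, mul_inv_cancel, MulChar.one_apply hx.isUnit]

variable [Fintype F]

theorem sum_mulChar_mul_inv_mulChar (χ : MulChar F R) :
    ∑ x, χ x * χ⁻¹ x = (Fintype.card F : R) - 1 := by
  simp only [← MulChar.mul_apply, mul_inv_cancel]
  rw [MulChar.sum_one_eq_card_units, Fintype.card_eq_card_units_add_one (α := F), Nat.cast_add,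
    Nat.cast_one, add_sub_cancel_right]

variable [IsDomain R]

theorem sum_mulChar_sub_mul_inv_mulChar_sub_of_ne {χ : MulChar F R} (hχ : χ ≠ 1) {a b : F}
    (hab : a ≠ b) : ∑ x, χ (x - a) * χ⁻¹ (x - b) = -1 := by
  have hd : b - a ≠ 0 := sub_ne_zero.mpr hab.symm
  let affine : F ≃ F := (Equiv.mulLeft₀ (b - a) hd).trans (Equiv.addRight a)
  have affine_sub_left (y : F) : affine y - a = (b - a) * y := by simp [affine]
  have affine_sub_right (y : F) : affine y - b = (b - a) * (-1 * (1 - y)) := by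
    linear_combination affine_sub_left y
  calc ∑ x, χ (x - a) * χ⁻¹ (x - b)
      = ∑ y, χ (affine y - a) * χ⁻¹ (affine y - b) := (affine.sum_comp _).symm
    _ = ∑ y, χ⁻¹ (-1) * (χ y * χ⁻¹ (1 - y)) := by
        refine Finset.sum_congr rfl fun y _ ↦ ?_
        rw [affine_sub_left, affine_sub_right, map_mul, map_mul, map_mul]
        linear_combination χ y * χ⁻¹ (-1) * χ⁻¹ (1 - y) * mulChar_mul_inv_mulChar_of_ne_zero χ hd
    _ = χ⁻¹ (-1) * -χ (-1) := by
        rw [← Finset.mul_sum, ← jacobiSum, jacobiSum_nontrivial_inv hχ]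
    _ = -1 := by
        linear_combination -mulChar_mul_inv_mulChar_of_ne_zero χ (neg_ne_zero.mpr one_ne_zero)

theorem sum_mulChar_sub_mul_inv_mulChar_sub [DecidableEq F] {χ : MulChar F R} (hχ : χ ≠ 1)
    (a b : F) :
    ∑ x, χ (x - a) * χ⁻¹ (x - b) = (if a = b then (Fintype.card F : R) else 0) - 1 := by
  split_ifs with hab
  · subst hab
    rw [← sum_mulChar_mul_inv_mulChar χ]
    exact (Equiv.subRight a).sum_comp fun x ↦ χ x * χ⁻¹ x
  · rw [sum_mulChar_sub_mul_inv_mulChar_sub_of_ne hχ hab, zero_sub]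

variable {ι : Type*} {s : Finset ι} {a : ι → F}

theorem sum_sum_mul_mulChar_sub_mul_sum_mul_inv_mulChar_sub {χ : MulChar F R} (hχ : χ ≠ 1)
    (ha : Set.InjOn a s) (v w : ι → R) :
    ∑ x, (∑ i ∈ s, v i * χ (x - a i)) * ∑ j ∈ s, w j * χ⁻¹ (x - a j) =
      Fintype.card F * ∑ i ∈ s, v i * w i - (∑ i ∈ s, v i) * ∑ j ∈ s, w j := by
  calc ∑ x, (∑ i ∈ s, v i * χ (x - a i)) * ∑ j ∈ s, w j * χ⁻¹ (x - a j)
      = ∑ i ∈ s, ∑ j ∈ s, v i * w j * ∑ x, χ (x - a i) * χ⁻¹ (x - a j) := by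
        simp_rw [Finset.sum_mul_sum, mul_mul_mul_comm, Finset.mul_sum]
        rw [Finset.sum_comm]
        exact Finset.sum_congr rfl fun i _ ↦ Finset.sum_comm
    _ = ∑ i ∈ s, ∑ j ∈ s, v i * w j * ((if i = j then (Fintype.card F : R) else 0) - 1) := by
        refine Finset.sum_congr rfl fun i hi ↦ Finset.sum_congr rfl fun j hj ↦ ?_
        simp only [sum_mulChar_sub_mul_inv_mulChar_sub hχ, ha.eq_iff hi hj]
    _ = Fintype.card F * ∑ i ∈ s, v i * w i - (∑ i ∈ s, v i) * ∑ j ∈ s, w j := by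
        rw [Finset.sum_mul_sum, Finset.mul_sum, ← Finset.sum_sub_distrib]
        refine Finset.sum_congr rfl fun i hi ↦ ?_
        simp only [mul_sub, mul_one, mul_ite, mul_zero, Finset.sum_sub_distrib, Finset.sum_ite_eq,
          hi, if_true, mul_comm]

theorem sum_sq_sum_mul_mulChar_sub {χ : MulChar F R} (hχ : χ ≠ 1) (hquad : χ.IsQuadratic)
    (ha : Set.InjOn a s) (w : ι → R) :
    ∑ x, (∑ i ∈ s, w i * χ (x - a i)) ^ 2 =
      Fintype.card F * ∑ i ∈ s, w i ^ 2 - (∑ i ∈ s, w i) ^ 2 := by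
  have h := sum_sum_mul_mulChar_sub_mul_sum_mul_inv_mulChar_sub hχ ha w w
  simpa only [hquad.inv, ← sq] using h

end MulChar

theorem sum_range_natCast_zmod {M : Type*} [AddCommMonoid M] (n : ℕ) [NeZero n] (f : ZMod n → M) :
    ∑ k ∈ Finset.range n, f k = ∑ x, f x :=
  Finset.sum_bij' (fun k _ ↦ (k : ZMod n)) (fun x _ ↦ x.val) (by simp)
    (fun x _ ↦ Finset.mem_range.mpr x.val_lt)
    (fun _ hk ↦ ZMod.val_cast_of_lt (Finset.mem_range.mp hk)) (by simp) (by simp)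

theorem intCast_injOn_Ico_add (R : Type*) [AddGroupWithOne R] (n : ℕ) [CharP R n] (a : ℤ) :
    Set.InjOn (Int.cast : ℤ → R) (Set.Ico a (a + n)) := by
  rintro x ⟨hax, hxn⟩ y ⟨hay, hyn⟩ hxy
  have hdvd : (n : ℤ) ∣ y - x := ((CharP.intCast_eq_intCast R n).mp hxy).dvd
  have hzero : y - x = 0 := Int.eq_zero_of_abs_lt_dvd hdvd (by rw [abs_lt]; lia)
  lia

section Legendre

variable {p : ℕ} [Fact p.Prime] {s : Finset ℤ} {R : Type*} [CommRing R]

theorem jacobiSym_prime_eq_quadraticChar (a : ℤ) : jacobiSym a p = quadraticChar (ZMod p) a := by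
  rw [← jacobiSym.legendreSym.to_jacobiSym, legendreSym]

theorem sum_range_sq_sum_mul_jacobiSym_sub [IsDomain R] [CharZero R] (hp : p ≠ 2)
    (hs : Set.InjOn (Int.cast : ℤ → ZMod p) s) (w : ℤ → R) :
    ∑ k ∈ Finset.range p, (∑ m ∈ s, w m * (jacobiSym (k - m) p : R)) ^ 2 =
      p * ∑ m ∈ s, w m ^ 2 - (∑ m ∈ s, w m) ^ 2 := by
  let χ : MulChar (ZMod p) R := (quadraticChar (ZMod p)).ringHomComp (Int.castRingHom R)
  have hχ : χ ≠ 1 := (MulChar.ringHomComp_ne_one_iff (Int.castRingHom R).injective_int).mpr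
    (quadraticChar_ne_one (by rwa [ZMod.ringChar_zmod_n]))
  have hquad : χ.IsQuadratic := (quadraticChar_isQuadratic (ZMod p)).comp _
  have hsymbol (k : ℕ) (m : ℤ) : (jacobiSym (k - m) p : R) = χ (k - m) := by
    simp [χ, jacobiSym_prime_eq_quadraticChar]
  simp only [hsymbol]
  rw [sum_range_natCast_zmod p fun x ↦ (∑ m ∈ s, w m * χ (x - m)) ^ 2,
    sum_sq_sum_mul_mulChar_sub hχ hquad hs, ZMod.card]

theorem sum_range_sq_sum_mul_jacobiSym_sub_le [LinearOrder R] [IsStrictOrderedRing R] (hp : p ≠ 2)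
    (hs : Set.InjOn (Int.cast : ℤ → ZMod p) s) (w : ℤ → R) :
    ∑ k ∈ Finset.range p, (∑ m ∈ s, w m * (jacobiSym (k - m) p : R)) ^ 2 ≤
      p * ∑ m ∈ s, w m ^ 2 :=
  (sum_range_sq_sum_mul_jacobiSym_sub hp hs w).trans_le (sub_le_self _ (sq_nonneg _))

end Legendre

theorem summable_sq_inv_intCast : Summable fun m : ℤ ↦ ((m : ℝ)⁻¹) ^ 2 := by
  simpa only [one_div, inv_pow] using Real.summable_one_div_int_pow.mpr one_lt_two

/-- There is an absolute constant `C > 0` such that for every odd prime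
`p`, `(1/p) ∑_{k<p} (∑_{1 ≤ |m| ≤ (p-1)/2} ((k-m)/p)/m)² ≤ C`, where `(·/p)` is the
Legendre symbol. -/
theorem second_moment_legendre_harmonic :
    ∃ C : ℝ, 0 < C ∧ ∀ p : ℕ, p.Prime → Odd p →
      (∑ k ∈ Finset.range p,
          (∑ m ∈ Finset.Icc (-(((p : ℤ) - 1) / 2)) (((p : ℤ) - 1) / 2) \ {0},
              (jacobiSym ((k : ℤ) - m) p : ℝ) / (m : ℝ)) ^ 2) / (p : ℝ)
        ≤ C := by
  -- The term `m = 0` of the series vanishes, since `(0 : ℝ)⁻¹ = 0`.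
  refine ⟨∑' m : ℤ, ((m : ℝ)⁻¹) ^ 2,
    summable_sq_inv_intCast.tsum_pos (fun m ↦ sq_nonneg _) 1 (by norm_num), fun p hp hodd ↦ ?_⟩
  have : Fact p.Prime := ⟨hp⟩
  set s := Finset.Icc (-(((p : ℤ) - 1) / 2)) (((p : ℤ) - 1) / 2) \ {0} with hs
  have hinj : Set.InjOn (Int.cast : ℤ → ZMod p) s := by
    refine (intCast_injOn_Ico_add (ZMod p) p (-(((p : ℤ) - 1) / 2))).mono fun m hm ↦ ?_
    simp only [hs, Finset.coe_sdiff, Finset.coe_Icc, Set.mem_sdiff, Set.mem_Icc] at hm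
    have := hp.pos
    exact ⟨hm.1.1, by lia⟩
  rw [div_le_iff₀' (mod_cast hp.pos)]
  simp only [div_eq_inv_mul]
  calc ∑ k ∈ Finset.range p, (∑ m ∈ s, (m : ℝ)⁻¹ * (jacobiSym ((k : ℤ) - m) p : ℝ)) ^ 2
      ≤ p * ∑ m ∈ s, ((m : ℝ)⁻¹) ^ 2 :=
        sum_range_sq_sum_mul_jacobiSym_sub_le (hodd.ne_two_of_dvd_nat dvd_rfl) hinj _
    _ ≤ p * ∑' m : ℤ, ((m : ℝ)⁻¹) ^ 2 := by
        gcongr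
        exact summable_sq_inv_intCast.sum_le_tsum s fun m _ ↦ sq_nonneg _

end
end

section
/- There is an absolute constant C > 0 such that for every prime p, every integer n \ge 1, and all integers m_1, \dots, m_n with |m_i| \le (p-1)/2, one has |(1/p) \sum_{k=0}^{p-1} \prod_{i=1}^n ((k-m_i)/p) - \delta| \le C n/\sqrt{p}, where \delta = 1 if every integer occurs an even number of times in the list m_1, \dots, m_n, and \delta = 0 otherwise. -/
open scoped Classical

noncomputable section

/-! Let `F` be a field with `q` elements, `q` odd, and let `f` be a polynomial of degree `n` over
`F` that is not a constant times a square. Stepanov's method bounds the number of `x` with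
`f(x) ^ ((q - 1) / 2) = ε`, where `ε = ± 1`. Consider the auxiliary polynomials
`R = ∑ j < J, (X - b) ^ (q j) (r_j + f ^ ((q - 1) / 2) s_j)` with `deg r_j, deg s_j ≤ d`. At a point
`x` of this kind, the `k`-th Hasse derivative of `f ^ N * u` is `f ^ (N - k)` times a polynomial of
low degree, and `(X - b) ^ q ≡ x - b` modulo `(X - x) ^ q`, so vanishing of `R` to order `l` at all
these points amounts to few linear conditions on the `r_j` and `s_j`: there is a nontrivial
solution. Then `R ≠ 0`, since otherwise `f r ^ 2 = f(b) s ^ 2` for some pair `(r, s) ≠ 0`, and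
comparing `deg R` with the number of zeros leaves at most `q / 2 + O(n √q)` points. Using this for
both signs gives `|∑ x, χ(f(x))| = O(n √q)` for the quadratic character `χ`.

If some value occurs an odd number of times among the `m_i`, then `∏ i, (X - m_i)` is not a
constant times a square; otherwise `∏ i, χ(x - m_i) = 1` for every `x` outside the at most `n`
values `m_i`. -/

section HasseDeriv

open Polynomial Finset

variable {R : Type*}

theorem exists_pow_mul_hasseDeriv_eq_mul [CommSemiring R] (f : R[X]) (k : ℕ) :
    ∃ g : R[X], g.natDegree ≤ k * f.natDegree ∧ f ^ k * hasseDeriv k f = f * g := by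
  cases k with
  | zero => exact ⟨1, by simp⟩
  | succ k =>
    refine ⟨f ^ k * hasseDeriv (k + 1) f, ?_, by ring⟩
    calc (f ^ k * hasseDeriv (k + 1) f).natDegree
        ≤ k * f.natDegree + (f.natDegree - (k + 1)) :=
          natDegree_mul_le_of_le natDegree_pow_le (natDegree_hasseDeriv_le f (k + 1))
      _ ≤ (k + 1) * f.natDegree := by rw [add_one_mul]; omega

-- By the Leibniz rule the Hasse derivative of order `k` costs at most `k` factors `f`.
theorem exists_linearMap_pow_mul_hasseDeriv_eq [CommSemiring R] (f : R[X]) (N k : ℕ) :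
    ∃ T : R[X] →ₗ[R] R[X], (∀ u, (T u).natDegree ≤ u.natDegree + k * f.natDegree) ∧
      ∀ u, f ^ k * hasseDeriv k (f ^ N * u) = f ^ N * T u := by
  induction N generalizing k with
  | zero =>
    refine ⟨LinearMap.mulLeft R (f ^ k) ∘ₗ hasseDeriv k, fun u => ?_, fun u => by simp⟩
    calc (f ^ k * hasseDeriv k u).natDegree
        ≤ k * f.natDegree + (u.natDegree - k) :=
          natDegree_mul_le_of_le natDegree_pow_le (natDegree_hasseDeriv_le u k)
      _ ≤ u.natDegree + k * f.natDegree := by omega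
  | succ N ih =>
    choose g hg_deg hg using exists_pow_mul_hasseDeriv_eq_mul f
    choose T hT_deg hT using ih
    refine ⟨∑ ij ∈ antidiagonal k, LinearMap.mulLeft R (g ij.1) ∘ₗ T ij.2, fun u => ?_,
      fun u => ?_⟩
    · simp only [LinearMap.sum_apply, LinearMap.comp_apply, LinearMap.mulLeft_apply]
      refine natDegree_sum_le_of_forall_le _ _ fun ij hij => ?_
      calc (g ij.1 * T ij.2 u).natDegree
          ≤ ij.1 * f.natDegree + (u.natDegree + ij.2 * f.natDegree) :=
            natDegree_mul_le_of_le (hg_deg _) (hT_deg _ u)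
        _ = u.natDegree + k * f.natDegree := by rw [← mem_antidiagonal.mp hij]; ring
    · simp only [LinearMap.sum_apply, LinearMap.comp_apply, LinearMap.mulLeft_apply]
      rw [pow_succ', mul_assoc, hasseDeriv_mul, mul_sum, mul_sum]
      refine sum_congr rfl fun ij hij => ?_
      calc f ^ k * (hasseDeriv ij.1 f * hasseDeriv ij.2 (f ^ N * u))
          = (f ^ ij.1 * hasseDeriv ij.1 f) * (f ^ ij.2 * hasseDeriv ij.2 (f ^ N * u)) := by
            rw [← mem_antidiagonal.mp hij]; ring
        _ = f * f ^ N * (g ij.1 * T ij.2 u) := by rw [hg, hT]; ring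

theorem X_sub_C_pow_dvd_iff_eval_hasseDeriv_eq_zero [CommRing R] {f : R[X]} {a : R} {l : ℕ} :
    (X - C a) ^ l ∣ f ↔ ∀ k < l, (hasseDeriv k f).eval a = 0 := by
  simp only [X_sub_C_pow_dvd_iff, ← taylor_apply, X_pow_dvd_iff, taylor_coeff]

theorem mul_card_le_natDegree_of_X_sub_C_pow_dvd [CommRing R] [IsDomain R] {f : R[X]}
    (hf : f ≠ 0) {l : ℕ} {S : Finset R} (hS : ∀ a ∈ S, (X - C a) ^ l ∣ f) :
    l * #S ≤ f.natDegree := by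
  have hle : l • S.val ≤ f.roots := by
    refine Multiset.le_iff_count.mpr fun a => ?_
    rw [Multiset.count_nsmul, count_roots]
    by_cases ha : a ∈ S
    · rw [Multiset.count_eq_one_of_mem S.nodup ha, mul_one]
      exact (le_rootMultiplicity_iff hf).mpr (hS a ha)
    · simp [Multiset.count_eq_zero_of_notMem (mt Finset.mem_val.mp ha)]
  simpa using (Multiset.card_le_card hle).trans f.card_roots'

end HasseDeriv

section AuxiliaryPolynomial

open Polynomial Finset Module

variable {K : Type*} [Field K]

theorem mem_degreeLT_succ_iff_natDegree_le {R : Type*} [Semiring R] {f : R[X]} {d : ℕ} :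
    f ∈ degreeLT R (d + 1) ↔ f.natDegree ≤ d := by
  rw [mem_degreeLT, degree_lt_iff_coeff_zero, natDegree_le_iff_coeff_eq_zero]
  rfl

theorem finrank_degreeLT {R : Type*} [Semiring R] [StrongRankCondition R] (d : ℕ) :
    finrank R (degreeLT R d) = d := by
  rw [finrank_eq_card_basis (degreeLT.basis R d), Fintype.card_fin]

theorem exists_ne_zero_forall_eq_zero_of_mem_degreeLT {ι V : Type*} [Fintype ι]
    [AddCommGroup V] [Module K V] [FiniteDimensional K V] (φ : ι → V →ₗ[K] K[X]) {M : ℕ}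
    (hφ : ∀ i v, φ i v ∈ degreeLT K M) (hM : Fintype.card ι * M < finrank K V) :
    ∃ v ≠ 0, ∀ i, φ i v = 0 := by
  have : FiniteDimensional K (degreeLT K M) := (degreeLT.basis K M).finiteDimensional_of_finite
  let Φ : V →ₗ[K] ι → degreeLT K M := LinearMap.pi fun i => (φ i).codRestrict _ (hφ i)
  have hΦ : Φ.ker ≠ ⊥ := LinearMap.ker_ne_bot_of_finrank_lt (by
    simpa [finrank_pi_fintype, finrank_degreeLT] using hM)
  obtain ⟨v, hv, hv0⟩ := (Submodule.ne_bot_iff _).mp hΦ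
  exact ⟨v, hv0, fun i => congrArg Subtype.val (congrFun (LinearMap.mem_ker.mp hv) i)⟩

theorem exists_linearMap_eval_eq_pow_mul_sum_hasseDeriv {R : Type*} [CommRing R]
    (f : R[X]) (N J k : ℕ) (b ε : R) :
    ∃ Φ : (Fin J → R[X] × R[X]) →ₗ[R] R[X],
      (∀ v d, (∀ j, (v j).1.natDegree ≤ d ∧ (v j).2.natDegree ≤ d) →
        (Φ v).natDegree ≤ (J - 1) + (d + k * f.natDegree)) ∧
      ∀ v x, f.eval x ^ N = ε → (Φ v).eval x = f.eval x ^ k *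
        ∑ j : Fin J, (x - b) ^ (j : ℕ) * (hasseDeriv k ((v j).1 + f ^ N * (v j).2)).eval x := by
  obtain ⟨T, hT_deg, hT⟩ := exists_linearMap_pow_mul_hasseDeriv_eq f N k
  obtain ⟨T₀, hT₀_deg, hT₀⟩ := exists_linearMap_pow_mul_hasseDeriv_eq f 0 k
  let Φ : (Fin J → R[X] × R[X]) →ₗ[R] R[X] :=
    ∑ j : Fin J, LinearMap.mulLeft R ((X - C b) ^ (j : ℕ)) ∘ₗ
      (T₀ ∘ₗ LinearMap.fst R _ _ + ε • T ∘ₗ LinearMap.snd R _ _) ∘ₗ LinearMap.proj j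
  have hΦ (v) : Φ v = ∑ j : Fin J, (X - C b) ^ (j : ℕ) * (T₀ (v j).1 + ε • T (v j).2) := by
    simp [Φ]
  refine ⟨Φ, fun v d hv => ?_, fun v x hx => ?_⟩ <;> rw [hΦ]
  · refine natDegree_sum_le_of_forall_le _ _ fun j _ => ?_
    refine natDegree_mul_le_of_le ?_ (natDegree_add_le_of_degree_le ?_ ?_)
    · exact (natDegree_pow_le_of_le _ (natDegree_X_sub_C_le b)).trans (by omega)
    · exact (hT₀_deg _).trans (Nat.add_le_add_right (hv j).1 _)
    · exact (natDegree_smul_le _ _).trans ((hT_deg _).trans (Nat.add_le_add_right (hv j).2 _))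
  · rw [eval_finsetSum, mul_sum]
    refine sum_congr rfl fun j _ => ?_
    have h₁ := congrArg (eval x) (hT₀ (v j).1)
    have h₂ := congrArg (eval x) (hT (v j).2)
    simp only [pow_zero, one_mul, eval_mul, eval_pow, hx] at h₁ h₂
    simp only [map_add, eval_mul, eval_pow, eval_sub, eval_X, eval_C, eval_add, eval_smul,
      smul_eq_mul, ← h₁, ← h₂]
    ring

theorem exists_ne_zero_X_sub_C_pow_dvd_sum (f : K[X]) (b ε : K) (N : ℕ) {d J l : ℕ}
    (h : l * (d + J + l * f.natDegree) < 2 * (d + 1) * J) :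
    ∃ v : Fin J → K[X] × K[X], v ≠ 0 ∧ (∀ j, (v j).1.natDegree ≤ d ∧ (v j).2.natDegree ≤ d) ∧
      ∀ x, f.eval x ≠ 0 → f.eval x ^ N = ε →
        (X - C x) ^ l ∣ ∑ j : Fin J, C ((x - b) ^ (j : ℕ)) * ((v j).1 + f ^ N * (v j).2) := by
  choose Φ hΦ_deg hΦ using fun k =>
    exists_linearMap_eval_eq_pow_mul_sum_hasseDeriv f N J k b ε
  let ι : (Fin J → degreeLT K (d + 1) × degreeLT K (d + 1)) →ₗ[K] Fin J → K[X] × K[X] :=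
    ((degreeLT K (d + 1)).subtype.prodMap (degreeLT K (d + 1)).subtype).compLeft (Fin J)
  have hι_inj : Function.Injective ι :=
    (Subtype.val_injective.prodMap Subtype.val_injective).comp_left
  have hι_deg : ∀ w j, (ι w j).1.natDegree ≤ d ∧ (ι w j).2.natDegree ≤ d := fun w j =>
    ⟨mem_degreeLT_succ_iff_natDegree_le.mp (w j).1.2,
      mem_degreeLT_succ_iff_natDegree_le.mp (w j).2.2⟩
  have : FiniteDimensional K (degreeLT K (d + 1)) :=
    (degreeLT.basis K (d + 1)).finiteDimensional_of_finite
  have hJ : 0 < J := Nat.pos_of_ne_zero fun hJ => by simp [hJ] at h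
  obtain ⟨w, hw_ne, hw⟩ := exists_ne_zero_forall_eq_zero_of_mem_degreeLT
    (fun k : Fin l => Φ k ∘ₗ ι) (M := d + J + l * f.natDegree) (fun k w => by
      have hk : (k : ℕ) * f.natDegree ≤ l * f.natDegree := Nat.mul_le_mul_right _ k.2.le
      have hdeg := hΦ_deg k _ _ (hι_deg w)
      rw [show d + J + l * f.natDegree = (J - 1) + (d + l * f.natDegree) + 1 by omega]
      exact mem_degreeLT_succ_iff_natDegree_le.mpr (hdeg.trans (by omega)))
    (by
      simp only [finrank_pi_fintype, finrank_prod, finrank_degreeLT, sum_const, card_univ,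
        Fintype.card_fin, smul_eq_mul]
      linarith)
  refine ⟨ι w, (map_ne_zero_iff ι hι_inj).mpr hw_ne, hι_deg w, fun x hx hxN => ?_⟩
  refine X_sub_C_pow_dvd_iff_eval_hasseDeriv_eq_zero.mpr fun k hk => ?_
  have hzero := hΦ k (ι w) x hxN
  rw [← LinearMap.comp_apply, hw ⟨k, hk⟩, eval_zero, zero_eq_mul] at hzero
  simpa only [map_sum, ← smul_eq_C_mul, map_smul, eval_finsetSum, eval_smul, smul_eq_mul] using
    hzero.resolve_left (pow_ne_zero k hx)

end AuxiliaryPolynomial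

section Stepanov

open Polynomial Finset

theorem eq_zero_of_mul_sq_eq_C_mul_sq {K : Type*} [Field K] {f r s : K[X]} {a : K} (ha : a ≠ 0)
    (hf : ∀ c g, f ≠ C c * g ^ 2) (h : f * r ^ 2 = C a * s ^ 2) : r = 0 ∧ s = 0 := by
  have hCa : IsUnit (C a) := isUnit_C.mpr ha.isUnit
  rcases eq_or_ne r 0 with rfl | hr
  · exact ⟨rfl, by simpa [ha] using h⟩
  · have hdvd : r ^ 2 ∣ s ^ 2 := hCa.dvd_mul_left.mp ⟨f, by rw [← h, mul_comm]⟩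
    obtain ⟨g, rfl⟩ := (IsIntegrallyClosed.pow_dvd_pow_iff two_ne_zero).mp hdvd
    exact absurd (mul_right_cancel₀ (pow_ne_zero 2 hr) (h.trans (by ring))) (hf a g)

variable {F : Type*} [Field F] [Fintype F] {f : F[X]} {b : F} {d J l : ℕ}

theorem X_sub_C_pow_card_dvd_pow_card_sub_C_eval (f : F[X]) (x : F) :
    (X - C x) ^ Fintype.card F ∣ f ^ Fintype.card F - C (f.eval x) := by
  have hpow : (f - C (f.eval x)) ^ Fintype.card F = f ^ Fintype.card F - C (f.eval x) := by
    rw [← FiniteField.expand_card, map_sub, expand_C, FiniteField.expand_card]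
  exact hpow ▸ pow_dvd_pow_of_dvd X_sub_C_dvd_sub_C_eval _

theorem two_mul_card_div_two_add_one (hF : ringChar F ≠ 2) :
    2 * (Fintype.card F / 2) + 1 = Fintype.card F := by
  have := FiniteField.odd_card_of_char_ne_two hF
  omega

-- Multiplying by `r - f ^ (q / 2) * s` and using `f ^ q ≡ f b` turns the hypothesis into
-- `f * r ^ 2 ≡ f b * s ^ 2` modulo `(X - b) ^ q`, which is an equality for degree reasons.
theorem eq_zero_of_X_sub_C_pow_card_dvd_add (hF : ringChar F ≠ 2)
    (hf : ∀ c g, f ≠ C c * g ^ 2) (hb : f.eval b ≠ 0) (hd : 2 * d + f.natDegree < Fintype.card F)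
    {r s : F[X]} (hr : r.natDegree ≤ d) (hs : s.natDegree ≤ d)
    (h : (X - C b) ^ Fintype.card F ∣ r + f ^ (Fintype.card F / 2) * s) : r = 0 ∧ s = 0 := by
  refine eq_zero_of_mul_sq_eq_C_mul_sq hb hf (sub_eq_zero.mp ?_)
  have hdvd : (X - C b) ^ Fintype.card F ∣ f * r ^ 2 - C (f.eval b) * s ^ 2 := by
    have hpow : f ^ Fintype.card F = f * (f ^ (Fintype.card F / 2)) ^ 2 := by
      conv_lhs => rw [← two_mul_card_div_two_add_one hF]
      ring
    have hsplit : f * r ^ 2 - C (f.eval b) * s ^ 2 =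
        (r + f ^ (Fintype.card F / 2) * s) * (f * (r - f ^ (Fintype.card F / 2) * s)) +
          (f ^ Fintype.card F - C (f.eval b)) * s ^ 2 := by
      rw [hpow]; ring
    rw [hsplit]
    exact dvd_add (h.mul_right _) ((X_sub_C_pow_card_dvd_pow_card_sub_C_eval f b).mul_right _)
  refine eq_zero_of_dvd_of_natDegree_lt hdvd ?_
  rw [natDegree_pow, natDegree_X_sub_C, mul_one]
  have hr₂ : (f * r ^ 2).natDegree ≤ f.natDegree + 2 * d :=
    natDegree_mul_le_of_le le_rfl (natDegree_pow_le_of_le 2 hr)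
  have hs₂ : (C (f.eval b) * s ^ 2).natDegree ≤ 2 * d :=
    (natDegree_C_mul_le _ _).trans (natDegree_pow_le_of_le 2 hs)
  have := natDegree_sub_le_of_le hr₂ hs₂
  omega

theorem eq_zero_of_sum_mul_X_sub_C_pow_eq_zero (hF : ringChar F ≠ 2)
    (hf : ∀ c g, f ≠ C c * g ^ 2) (hb : f.eval b ≠ 0) (hd : 2 * d + f.natDegree < Fintype.card F)
    {v : Fin J → F[X] × F[X]} (hv : ∀ j, (v j).1.natDegree ≤ d ∧ (v j).2.natDegree ≤ d)
    (h : ∑ j : Fin J, ((X - C b) ^ Fintype.card F) ^ (j : ℕ) *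
      ((v j).1 + f ^ (Fintype.card F / 2) * (v j).2) = 0) : v = 0 := by
  induction J with
  | zero => exact Subsingleton.elim _ _
  | succ J ih =>
    simp only [Fin.sum_univ_succ, Fin.val_zero, Fin.val_succ, pow_zero, one_mul, pow_succ',
      mul_assoc, ← mul_sum] at h
    have hzero : v 0 = 0 := Prod.ext_iff.mpr <|
      eq_zero_of_X_sub_C_pow_card_dvd_add hF hf hb hd (hv 0).1 (hv 0).2
        ((dvd_add_left (dvd_mul_right _ _)).mp (h ▸ dvd_zero _))
    have htail : (fun j : Fin J => v j.succ) = 0 := by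
      refine ih (fun j => hv j.succ) ?_
      simpa [hzero, X_sub_C_ne_zero] using h
    exact funext (Fin.cases hzero fun j => congrFun htail j)

theorem X_sub_C_pow_dvd_sum_pow_card_mul_iff (b x : F) (u : Fin J → F[X])
    (hl : l ≤ Fintype.card F) :
    (X - C x) ^ l ∣ ∑ j : Fin J, ((X - C b) ^ Fintype.card F) ^ (j : ℕ) * u j ↔
      (X - C x) ^ l ∣ ∑ j : Fin J, C ((x - b) ^ (j : ℕ)) * u j := by
  have hmod : (X - C x) ^ l ∣ (X - C b) ^ Fintype.card F - C (x - b) := by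
    have := X_sub_C_pow_card_dvd_pow_card_sub_C_eval (X - C b) x
    rw [eval_sub, eval_X, eval_C] at this
    exact (pow_dvd_pow _ hl).trans this
  refine dvd_iff_dvd_of_dvd_sub ?_
  rw [← sum_sub_distrib]
  refine dvd_sum fun j _ => ?_
  rw [← sub_mul, C_pow]
  exact (hmod.trans (sub_dvd_pow_sub_pow _ _ _)).mul_right _

theorem mul_card_le_of_eval_pow_eq (hF : ringChar F ≠ 2) (hf : ∀ c g, f ≠ C c * g ^ 2)
    (hb : f.eval b ≠ 0) (hd : 2 * d + f.natDegree < Fintype.card F) (hl : l ≤ Fintype.card F)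
    (h : l * (d + J + l * f.natDegree) < 2 * (d + 1) * J) {ε : F} {S : Finset F}
    (hS : ∀ x ∈ S, f.eval x ≠ 0 ∧ f.eval x ^ (Fintype.card F / 2) = ε) :
    l * #S ≤ Fintype.card F * J + (d + Fintype.card F / 2 * f.natDegree) := by
  obtain ⟨v, hv_ne, hv_deg, hv⟩ :=
    exists_ne_zero_X_sub_C_pow_dvd_sum f b ε (Fintype.card F / 2) h
  set R : F[X] := ∑ j : Fin J, ((X - C b) ^ Fintype.card F) ^ (j : ℕ) *
    ((v j).1 + f ^ (Fintype.card F / 2) * (v j).2)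
  have hR_ne : R ≠ 0 := mt (eq_zero_of_sum_mul_X_sub_C_pow_eq_zero hF hf hb hd hv_deg) hv_ne
  have hR_dvd (x) (hx : x ∈ S) : (X - C x) ^ l ∣ R :=
    (X_sub_C_pow_dvd_sum_pow_card_mul_iff b x _ hl).mpr (hv x (hS x hx).1 (hS x hx).2)
  refine (mul_card_le_natDegree_of_X_sub_C_pow_dvd hR_ne hR_dvd).trans ?_
  refine natDegree_sum_le_of_forall_le _ _ fun j _ => ?_
  refine natDegree_mul_le_of_le ?_ (natDegree_add_le_of_degree_le ?_ ?_)
  · rw [natDegree_pow, natDegree_pow, natDegree_X_sub_C, mul_one, mul_comm]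
    exact Nat.mul_le_mul_left _ j.2.le
  · exact (hv_deg j).1.trans (Nat.le_add_right _ _)
  · rw [add_comm]
    exact natDegree_mul_le_of_le natDegree_pow_le (hv_deg j).2

theorem natDegree_pos_of_ne_C_mul_sq {R : Type*} [Semiring R] {f : R[X]}
    (hf : ∀ c g, f ≠ C c * g ^ 2) : 0 < f.natDegree := by
  refine Nat.pos_of_ne_zero fun hdeg => hf (f.coeff 0) 1 ?_
  rw [one_pow, mul_one]
  exact eq_C_of_natDegree_eq_zero hdeg

-- For `d ≈ (q - n) / 2` and `4 * t ^ 2 ≈ q` the two sides are about `t * q + (n + 1 / 2) * q` and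
-- `t * q + 2 * n * q`, whence the choice of `2 * n`.
theorem mul_add_lt_of_four_mul_sq_le {n q d t : ℕ} (hn : 0 < n) (ht : 4 * t ^ 2 ≤ q)
    (hnt : 9 * n < 2 * (t + 1)) (hd : q ≤ 2 * (d + 1) + n) :
    2 * t * (d + (t + 2 * n) + 2 * t * n) < 2 * (d + 1) * (t + 2 * n) := by
  have hsmall : n * (2 * t + n) ≤ n * t ^ 2 :=
    Nat.mul_le_mul_left n (by nlinarith [show 4 ≤ t by omega])
  have hlarge : n * (4 * t ^ 2) ≤ n * (2 * (d + 1) + n) := Nat.mul_le_mul_left n (ht.trans hd)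
  have hsq : t ^ 2 ≤ n * t ^ 2 := Nat.le_mul_of_pos_left _ hn
  nlinarith

theorem le_half_add_four_mul_sqrt_of_mul_le {n q d t s : ℕ} (hn : 0 < n) (ht : 0 < t)
    (hqt : 3 * √q ≤ 8 * t) (hd : 2 * d ≤ q)
    (h : 2 * t * s ≤ q * (t + 2 * n) + (d + q / 2 * n)) : (s : ℝ) ≤ q / 2 + 4 * n * √q := by
  have hcast : 2 * t * (s : ℝ) ≤ q * (t + 2 * n) + (d + (q / 2 : ℕ) * n) := by exact_mod_cast h
  have hd' : 2 * (d : ℝ) ≤ q := by exact_mod_cast hd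
  have hn' : (q : ℝ) ≤ q * n := le_mul_of_one_le_right q.cast_nonneg (Nat.one_le_cast.mpr hn)
  have hhalf : ((q / 2 : ℕ) : ℝ) * n ≤ q / 2 * n := by
    gcongr
    exact Nat.cast_div_le
  have hexcess : 2 * t * (s - q / 2 : ℝ) ≤ 2 * t * (4 * n * √q) :=
    calc 2 * t * (s - q / 2 : ℝ) ≤ 3 * n * q := by linarith
      _ = n * √q * (3 * √q) := by
        linear_combination (-3 * n : ℝ) * Real.mul_self_sqrt q.cast_nonneg
      _ ≤ n * √q * (8 * t) := by gcongr
      _ = 2 * t * (4 * n * √q) := by ring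
  linarith [le_of_mul_le_mul_left hexcess (by positivity)]

theorem card_le_of_eval_pow_eq (hF : ringChar F ≠ 2) (hf : ∀ c g, f ≠ C c * g ^ 2)
    (hq : 9 * f.natDegree < √(Fintype.card F)) {ε : F} {S : Finset F}
    (hS : ∀ x ∈ S, f.eval x ≠ 0 ∧ f.eval x ^ (Fintype.card F / 2) = ε) :
    (#S : ℝ) ≤ Fintype.card F / 2 + 4 * f.natDegree * √(Fintype.card F) := by
  have hn : 0 < f.natDegree := natDegree_pos_of_ne_C_mul_sq hf
  obtain ⟨t, ht_le, ht_lt⟩ :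
      ∃ t : ℕ, 2 * t ≤ √(Fintype.card F) ∧ √(Fintype.card F) < 2 * (t + 1) := by
    have hhalf : 0 ≤ √(Fintype.card F) / 2 := by positivity
    exact ⟨⌊√(Fintype.card F) / 2⌋₊, by linarith [Nat.floor_le hhalf],
      by linarith [Nat.lt_floor_add_one (√(Fintype.card F) / 2)]⟩
  have ht_sq : 4 * t ^ 2 ≤ Fintype.card F := by
    have hreal : (2 * t : ℝ) ^ 2 ≤ Fintype.card F :=
      (Real.le_sqrt (by positivity) (by positivity)).mp ht_le
    rw [← Nat.cast_le (α := ℝ)]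
    push_cast
    linarith
  have hnt : 9 * f.natDegree < 2 * (t + 1) := by exact_mod_cast hq.trans ht_lt
  have ht : 4 ≤ t := by omega
  have hnq : f.natDegree < Fintype.card F := by nlinarith
  obtain ⟨d, hd, hd'⟩ :
      ∃ d, 2 * d + f.natDegree < Fintype.card F ∧ Fintype.card F ≤ 2 * (d + 1) + f.natDegree :=
    ⟨(Fintype.card F - f.natDegree - 1) / 2, by omega, by omega⟩
  obtain ⟨b, hb⟩ := exists_eval_ne_zero_of_natDegree_lt_card f (ne_zero_of_natDegree_gt hn)
    (by simpa using hnq)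
  refine le_half_add_four_mul_sqrt_of_mul_le hn (by omega) ?_ (by omega) <|
    mul_card_le_of_eval_pow_eq hF hf hb hd (by nlinarith)
      (mul_add_lt_of_four_mul_sq_le hn ht_sq hnt hd') hS
  have ht' : (4 : ℝ) ≤ t := by exact_mod_cast ht
  linarith

end Stepanov

section QuadraticChar

open Polynomial Finset

variable {F : Type*} [Field F] [Fintype F] [DecidableEq F]

theorem abs_sum_quadraticChar_le_card (u : F → F) :
    |∑ x, (quadraticChar F (u x) : ℝ)| ≤ Fintype.card F := by
  calc |∑ x, (quadraticChar F (u x) : ℝ)| ≤ ∑ x, |(quadraticChar F (u x) : ℝ)| :=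
        abs_sum_le_sum_abs _ _
    _ ≤ ∑ _x : F, 1 := sum_le_sum fun x _ => by
        rcases eq_or_ne (u x) 0 with h | h
        · simp [h]
        · rcases quadraticChar_dichotomy h with h | h <;> simp [h]
    _ = Fintype.card F := by simp

theorem card_add_mul_sum_quadraticChar_eq (u : F → F) {ε : ℤ} (hε : ε = 1 ∨ ε = -1) :
    Fintype.card F + ε * ∑ x, (quadraticChar F (u x) : ℝ) =
      2 * #{x | quadraticChar F (u x) = ε} + #{x | u x = 0} := by
  have hpoint (x : F) : (1 + ε * quadraticChar F (u x) : ℝ) =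
      2 * (if quadraticChar F (u x) = ε then 1 else 0) + if u x = 0 then 1 else 0 := by
    rcases eq_or_ne (u x) 0 with h | h
    · rcases hε with rfl | rfl <;> simp [h]
    · rcases quadraticChar_dichotomy h with h' | h' <;> rcases hε with rfl | rfl <;>
        norm_num [h, h']
  calc _ = ∑ x : F, (1 + ε * quadraticChar F (u x) : ℝ) := by simp [sum_add_distrib, mul_sum]
    _ = _ := by simp only [hpoint, sum_add_distrib, ← mul_sum, sum_boole]

theorem card_eval_eq_zero_le_natDegree {R : Type*} [CommRing R] [IsDomain R] [Fintype R]
    [DecidableEq R] {f : R[X]} (hf : f ≠ 0) : #{x | f.eval x = 0} ≤ f.natDegree :=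
  card_le_degree_of_subset_roots fun x hx => by simpa [hf] using hx

theorem abs_sum_quadraticChar_eval_le (hF : ringChar F ≠ 2) {f : F[X]}
    (hf : ∀ c g, f ≠ C c * g ^ 2) :
    |∑ x, (quadraticChar F (f.eval x) : ℝ)| ≤ 9 * f.natDegree * √(Fintype.card F) := by
  have hsq : √(Fintype.card F) * √(Fintype.card F) = (Fintype.card F : ℝ) :=
    Real.mul_self_sqrt (Nat.cast_nonneg _)
  rcases le_or_gt √(Fintype.card F) (9 * f.natDegree) with hq | hq
  · refine (abs_sum_quadraticChar_le_card _).trans ?_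
    calc (Fintype.card F : ℝ) = √(Fintype.card F) * √(Fintype.card F) := hsq.symm
      _ ≤ 9 * f.natDegree * √(Fintype.card F) := by gcongr
  have hn : 0 < f.natDegree := natDegree_pos_of_ne_C_mul_sq hf
  have hzeros : (#{x | f.eval x = 0} : ℝ) ≤ f.natDegree * √(Fintype.card F) := by
    have hw : (1 : ℝ) ≤ √(Fintype.card F) :=
      Real.one_le_sqrt.mpr (Nat.one_le_cast.mpr Fintype.card_pos)
    calc (#{x | f.eval x = 0} : ℝ) ≤ f.natDegree :=
          Nat.cast_le.mpr (card_eval_eq_zero_le_natDegree (ne_zero_of_natDegree_gt hn))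
      _ ≤ f.natDegree * √(Fintype.card F) := le_mul_of_one_le_right (Nat.cast_nonneg _) hw
  have hbound (ε : ℤ) (hε : ε = 1 ∨ ε = -1) :
      ε * ∑ x, (quadraticChar F (f.eval x) : ℝ) ≤ 9 * f.natDegree * √(Fintype.card F) := by
    have hcard := card_le_of_eval_pow_eq hF hf hq (ε := (ε : F))
      (S := {x | quadraticChar F (f.eval x) = ε}) fun x hx => by
        have hx : quadraticChar F (f.eval x) = ε := (mem_filter.mp hx).2
        refine ⟨fun h => ?_, by rw [← quadraticChar_eq_pow_of_char_ne_two' hF, hx]⟩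
        rw [h, quadraticChar_zero] at hx
        omega
    linarith [card_add_mul_sum_quadraticChar_eq f.eval hε]
  exact abs_le'.mpr ⟨by simpa using hbound 1 (.inl rfl), by simpa using hbound (-1) (.inr rfl)⟩

end QuadraticChar

section ShiftedProduct

open Polynomial Finset

variable {ι : Type*} [Fintype ι]

theorem rootMultiplicity_prod_X_sub_C {R : Type*} [CommRing R] [IsDomain R] [DecidableEq R]
    (m : ι → R) (a : R) : (∏ i, (X - C (m i))).rootMultiplicity a = #{i | m i = a} := by
  rw [← count_roots, roots_prod _ _ (prod_ne_zero_iff.mpr fun i _ => X_sub_C_ne_zero _)]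
  simp only [roots_X_sub_C, Multiset.bind_singleton, Multiset.count_map, eq_comm (a := a)]
  rfl

theorem even_rootMultiplicity_of_eq_C_mul_sq {R : Type*} [CommRing R] [IsDomain R] {f g : R[X]}
    {c : R} (hf : f ≠ 0) (h : f = C c * g ^ 2) (a : R) : Even (f.rootMultiplicity a) := by
  subst h
  rw [rootMultiplicity_mul hf, rootMultiplicity_C, zero_add, sq,
    rootMultiplicity_mul (by simpa [sq] using right_ne_zero_of_mul hf)]
  exact Even.add_self _

variable {F : Type*} [Field F] [Fintype F] [DecidableEq F]

theorem abs_sum_prod_quadraticChar_le (hF : ringChar F ≠ 2) {m : ι → F} {a : F}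
    (ha : ¬Even #{i | m i = a}) :
    |∑ x, ∏ i, (quadraticChar F (x - m i) : ℝ)| ≤ 9 * Fintype.card ι * √(Fintype.card F) := by
  have hne : ∏ i, (X - C (m i)) ≠ 0 := prod_ne_zero_iff.mpr fun i _ => X_sub_C_ne_zero _
  have hbound := abs_sum_quadraticChar_eval_le hF (f := ∏ i, (X - C (m i))) fun c g h =>
    ha (rootMultiplicity_prod_X_sub_C m a ▸ even_rootMultiplicity_of_eq_C_mul_sq hne h a)
  simpa [eval_prod, natDegree_finsetProd_X_sub_C_eq_card] using hbound

theorem prod_quadraticChar_sub_eq_ite {m : ι → F} (hm : ∀ a, Even #{i | m i = a}) (x : F) :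
    ∏ i, quadraticChar F (x - m i) = if x ∈ univ.image m then 0 else 1 := by
  split_ifs with hx
  · obtain ⟨i, hi, rfl⟩ := mem_image.mp hx
    exact prod_eq_zero hi (by simp)
  · rw [prod_comp (fun a => quadraticChar F (x - a)) m]
    refine prod_eq_one fun a ha => ?_
    obtain ⟨k, hk⟩ := hm a
    have hxa : x - a ≠ 0 := sub_ne_zero.mpr fun h => hx (h ▸ ha)
    rw [hk, ← two_mul, pow_mul, quadraticChar_sq_one hxa, one_pow]

theorem abs_sum_prod_quadraticChar_sub_card_le {m : ι → F} (hm : ∀ a, Even #{i | m i = a}) :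
    |∑ x, ∏ i, (quadraticChar F (x - m i) : ℝ) - Fintype.card F| ≤ Fintype.card ι := by
  have hsum : ∑ x, ∏ i, (quadraticChar F (x - m i) : ℝ) = Fintype.card F - #(univ.image m) := by
    have hpoint (x : F) : ∏ i, (quadraticChar F (x - m i) : ℝ) =
        1 - if x ∈ univ.image m then 1 else 0 := by
      rw [← Int.cast_prod, prod_quadraticChar_sub_eq_ite hm]
      split_ifs <;> simp
    simp only [hpoint, sum_sub_distrib, sum_boole, filter_univ_mem]
    simp
  rw [hsum, sub_sub_cancel_left, abs_neg, Nat.abs_cast]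
  exact Nat.cast_le.mpr card_image_le

theorem abs_sum_prod_quadraticChar_sub_ite_le (hF : ringChar F = 2 → Fintype.card F = 2)
    (m : ι → F) :
    |∑ x, ∏ i, (quadraticChar F (x - m i) : ℝ) -
        if ∀ a, Even #{i | m i = a} then (Fintype.card F : ℝ) else 0|
      ≤ 9 * Fintype.card ι * √(Fintype.card F) := by
  have hw : 1 ≤ √(Fintype.card F) := Real.one_le_sqrt.mpr (Nat.one_le_cast.mpr Fintype.card_pos)
  split_ifs with hm
  · have hn : (0 : ℝ) ≤ Fintype.card ι := Nat.cast_nonneg _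
    exact (abs_sum_prod_quadraticChar_sub_card_le hm).trans (by nlinarith [hn])
  · obtain ⟨a, ha⟩ := not_forall.mp hm
    rw [sub_zero]
    by_cases hchar : ringChar F = 2
    · obtain ⟨i, -⟩ : ({i | m i = a} : Finset ι).Nonempty :=
        card_pos.mp (Nat.not_even_iff_odd.mp ha).pos
      have hn : (1 : ℝ) ≤ Fintype.card ι := Nat.one_le_cast.mpr (Fintype.card_pos_iff.mpr ⟨i⟩)
      have htriv := abs_sum_quadraticChar_le_card fun x => ∏ i, (x - m i)
      simp only [map_prod, Int.cast_prod, hF hchar] at htriv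
      exact htriv.trans (by push_cast; nlinarith)
    · exact abs_sum_prod_quadraticChar_le hchar ha

theorem weil_bound_shifted_legendre_general (hF : ringChar F = 2 → Fintype.card F = 2)
    (m : ι → F) :
    |(∑ x, ∏ i, (quadraticChar F (x - m i) : ℝ)) / Fintype.card F -
        (if ∀ a, Even #{i | m i = a} then (1 : ℝ) else 0)|
      ≤ 9 * Fintype.card ι / √(Fintype.card F) := by
  have hq : (0 : ℝ) < Fintype.card F := Nat.cast_pos.mpr Fintype.card_pos
  have hmul : |(∑ x, ∏ i, (quadraticChar F (x - m i) : ℝ)) / Fintype.card F -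
      (if ∀ a, Even #{i | m i = a} then (1 : ℝ) else 0)| * Fintype.card F ≤
        9 * Fintype.card ι * √(Fintype.card F) := by
    rw [← abs_of_pos hq, ← abs_mul, abs_of_pos hq, sub_mul, div_mul_cancel₀ _ hq.ne', ite_mul,
      one_mul, zero_mul]
    exact abs_sum_prod_quadraticChar_sub_ite_le hF m
  calc _ ≤ 9 * Fintype.card ι * √(Fintype.card F) / Fintype.card F := (le_div_iff₀ hq).mpr hmul
    _ = _ := by rw [mul_div_assoc, Real.sqrt_div_self, ← div_eq_mul_inv]

end ShiftedProduct

section Integers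

open Finset

variable {ι : Type*} [Fintype ι]

theorem sum_range_prod_jacobiSym_sub (p : ℕ) [Fact p.Prime] (m : ι → ℤ) :
    ∑ k ∈ range p, ∏ i, (jacobiSym (k - m i) p : ℝ) =
      ∑ x : ZMod p, ∏ i, (quadraticChar (ZMod p) (x - m i) : ℝ) := by
  refine sum_nbij' (fun k => (k : ZMod p)) ZMod.val (fun _ _ => mem_univ _)
    (fun x _ => mem_range.mpr x.val_lt)
    (fun k hk => ZMod.val_cast_of_lt (mem_range.mp hk)) (fun x _ => ZMod.natCast_zmod_val x)
    fun k _ => ?_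
  simp only [← jacobiSym.legendreSym.to_jacobiSym, legendreSym, Int.cast_sub, Int.cast_natCast]

theorem intCast_zmod_injOn (p : ℕ) :
    Set.InjOn (Int.cast : ℤ → ZMod p) {a | |a| ≤ ((p : ℤ) - 1) / 2} := by
  intro a ha b hb h
  have hdvd := (ZMod.intCast_eq_intCast_iff_dvd_sub b a p).mp h.symm
  have hlt : |a - b| < p := (abs_sub a b).trans_lt (by grind)
  exact sub_eq_zero.mp (Int.eq_zero_of_abs_lt_dvd hdvd hlt)

theorem forall_even_card_fiber_comp_iff {α β : Type*} [DecidableEq α] [DecidableEq β]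
    {φ : α → β} {m : ι → α} {s : Set α} (hφ : s.InjOn φ) (hm : ∀ i, m i ∈ s) :
    (∀ b, Even #{i | φ (m i) = b}) ↔ ∀ a, Even #{i | m i = a} := by
  have hfiber (j : ι) : #{i | φ (m i) = φ (m j)} = #{i | m i = m j} := by
    simp only [hφ.eq_iff (hm _) (hm j)]
  refine ⟨fun h a => ?_, fun h b => ?_⟩
  · by_cases ha : ∃ j, m j = a
    · obtain ⟨j, rfl⟩ := ha
      exact hfiber j ▸ h _
    · simp [filter_false_of_mem fun i _ hi => ha ⟨i, hi⟩]
  · by_cases hb : ∃ j, φ (m j) = b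
    · obtain ⟨j, rfl⟩ := hb
      exact hfiber j ▸ h _
    · simp [filter_false_of_mem fun i _ hi => hb ⟨i, hi⟩]

end Integers

/-- Weil-type bound: for every prime `p`, `n ≥ 1` and integers
`m₁, …, mₙ` with `|mᵢ| ≤ (p-1)/2`, the average `(1/p) ∑_{k<p} ∏ᵢ ((k-mᵢ)/p)` is within
`C n/√p` of `δ`, where `δ = 1` if every integer occurs an even number of times among the
`mᵢ`, and `δ = 0` otherwise. -/
theorem weil_bound_shifted_legendre :
    ∃ C : ℝ, 0 < C ∧ ∀ p : ℕ, p.Prime → ∀ n : ℕ, 1 ≤ n → ∀ m : Fin n → ℤ,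
      (∀ i, |m i| ≤ ((p : ℤ) - 1) / 2) →
      |(∑ k ∈ Finset.range p, ∏ i, (jacobiSym ((k : ℤ) - m i) p : ℝ)) / (p : ℝ) -
          (if ∀ a : ℤ, Even (Finset.univ.filter fun i => m i = a).card then (1 : ℝ) else 0)|
        ≤ C * n / Real.sqrt p := by
  refine ⟨9, by norm_num, fun p hp n _ m hm => ?_⟩
  have : Fact p.Prime := ⟨hp⟩
  rw [sum_range_prod_jacobiSym_sub,
    ← if_congr (forall_even_card_fiber_comp_iff (intCast_zmod_injOn p) hm) rfl rfl]
  simpa only [ZMod.card, Fintype.card_fin] using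
    weil_bound_shifted_legendre_general (F := ZMod p) (by simp [ZMod.ringChar_zmod_n])
      fun i => (m i : ZMod p)

end
end

section
/- Let M \ge 2 be an integer and let \delta_m \in \{-1, 1\} be an arbitrary choice of signs for the integers m with m \ne 0, m \ne -1 and |m| \le M. Then the function h(t) = 1/t - 1/(1-t) + \sum_{m \ne 0,-1, |m| \le M} \delta_m/(m+t) satisfies h'(t) \le -8 + 2\zeta(2) < 0 for every t \in (0,1), where \zeta is the Riemann zeta function. -/
open scoped Classical

noncomputable section

/-!
Differentiating termwise, `-h'(t)` is `1/t² + 1/(1-t)²` plus `∑ δ_m/(m+t)²`. The first part is at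
least `8` by the inequality of arithmetic and geometric means. The second is at least
`-∑ 1/(m+t)²`, where the positive `m` contribute at most `∑ 1/m² ≤ ζ(2)` to `∑ 1/(m+t)²`; the
reflection `(m, t) ↦ (-1-m, 1-t)` preserves `(m+t)²` and gives the same bound for `m ≤ -2`.
-/

section Derivatives

variable {𝕜 : Type*} [NontriviallyNormedField 𝕜]

theorem hasDerivAt_sum_div_const_add {ι : Type*} {s : Finset ι} (c a : ι → 𝕜) {x : 𝕜}
    (hx : ∀ i ∈ s, a i + x ≠ 0) :
    HasDerivAt (fun u => ∑ i ∈ s, c i / (a i + u)) (∑ i ∈ s, -c i / (a i + x) ^ 2) x := by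
  refine HasDerivAt.fun_sum fun i hi => ?_
  simpa using (hasDerivAt_const x (c i)).fun_div ((hasDerivAt_id' x).const_add (a i)) (hx i hi)

theorem hasDerivAt_one_div_sub_one_div_one_sub {x : 𝕜} (h0 : x ≠ 0) (h1 : x ≠ 1) :
    HasDerivAt (fun u => 1 / u - 1 / (1 - u)) (-(1 / x ^ 2 + 1 / (1 - x) ^ 2)) x := by
  have hleft : HasDerivAt (fun u => 1 / u) (-(1 / x ^ 2)) x := by
    simpa only [one_div] using hasDerivAt_inv h0
  have hright : HasDerivAt (fun u => 1 / (1 - u)) (1 / (1 - x) ^ 2) x := by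
    simpa using ((hasDerivAt_id' x).const_sub 1).fun_inv (sub_ne_zero.mpr h1.symm)
  simpa only [neg_add'] using hleft.fun_sub hright

end Derivatives

theorem eight_div_add_sq_le {K : Type*} [Field K] [LinearOrder K] [IsStrictOrderedRing K]
    {a b : K} (ha : 0 < a) (hb : 0 < b) :
    8 / (a + b) ^ 2 ≤ 1 / a ^ 2 + 1 / b ^ 2 := by
  rw [div_add_div _ _ (by positivity) (by positivity),
    div_le_div_iff₀ (by positivity) (by positivity)]
  calc 8 * (a ^ 2 * b ^ 2) = (2 * a * b) * (4 * a * b) := by ring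
    _ ≤ (a ^ 2 + b ^ 2) * (a + b) ^ 2 := by
      gcongr
      · exact two_mul_le_add_sq a b
      · exact four_mul_le_sq_add a b
    _ = (1 * b ^ 2 + a ^ 2 * 1) * (a + b) ^ 2 := by ring

theorem sum_one_div_intCast_sq_le_of_pos {s : Finset ℤ} (hs : ∀ m ∈ s, 0 < m) :
    ∑ m ∈ s, 1 / (m : ℝ) ^ 2 ≤ Real.pi ^ 2 / 6 := by
  have hinj : Set.InjOn Int.natAbs s :=
    Int.injOn_natAbs_Ici.mono fun m hm => (hs m hm).le
  calc ∑ m ∈ s, 1 / (m : ℝ) ^ 2 = ∑ n ∈ s.image Int.natAbs, 1 / (n : ℝ) ^ 2 := by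
        simp only [Finset.sum_image hinj, Nat.cast_natAbs, Int.cast_abs, sq_abs]
    _ ≤ Real.pi ^ 2 / 6 := sum_le_hasSum _ (fun _ _ => by positivity) hasSum_zeta_two

theorem sum_one_div_intCast_add_sq_le_of_pos {s : Finset ℤ} (hs : ∀ m ∈ s, 0 < m) {t : ℝ}
    (ht : 0 ≤ t) : ∑ m ∈ s, 1 / ((m : ℝ) + t) ^ 2 ≤ Real.pi ^ 2 / 6 := by
  refine (Finset.sum_le_sum fun m hm => ?_).trans (sum_one_div_intCast_sq_le_of_pos hs)
  have hm0 : (0 : ℝ) < m := Int.cast_pos.mpr (hs m hm)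
  gcongr
  exact le_add_of_nonneg_right ht

theorem sum_one_div_intCast_add_sq_le_of_lt_neg_one {s : Finset ℤ} (hs : ∀ m ∈ s, m < -1) {t : ℝ}
    (ht : t ≤ 1) : ∑ m ∈ s, 1 / ((m : ℝ) + t) ^ 2 ≤ Real.pi ^ 2 / 6 := by
  have hpos : ∀ k ∈ s.image (-1 - ·), 0 < k := Finset.forall_mem_image.mpr fun m hm => by
    linarith [hs m hm]
  calc ∑ m ∈ s, 1 / ((m : ℝ) + t) ^ 2
      = ∑ k ∈ s.image (-1 - · : ℤ → ℤ), 1 / ((k : ℝ) + (1 - t)) ^ 2 := by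
        rw [Finset.sum_image sub_right_injective.injOn]
        refine Finset.sum_congr rfl fun m _ => ?_
        push_cast
        ring
    _ ≤ Real.pi ^ 2 / 6 := sum_one_div_intCast_add_sq_le_of_pos hpos (sub_nonneg.mpr ht)

theorem sum_one_div_intCast_add_sq_le {s : Finset ℤ} (h0 : 0 ∉ s) (h1 : -1 ∉ s) {t : ℝ}
    (ht : t ∈ Set.Icc (0 : ℝ) 1) :
    ∑ m ∈ s, 1 / ((m : ℝ) + t) ^ 2 ≤ 2 * (Real.pi ^ 2 / 6) := by
  rw [two_mul, ← Finset.sum_filter_add_sum_filter_not s (0 < ·)]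
  refine add_le_add (sum_one_div_intCast_add_sq_le_of_pos (by simp) ht.1)
    (sum_one_div_intCast_add_sq_le_of_lt_neg_one ?_ ht.2)
  intro m hm
  obtain ⟨hms, hm_nonpos⟩ := Finset.mem_filter.mp hm
  have := ne_of_mem_of_not_mem hms h0
  have := ne_of_mem_of_not_mem hms h1
  lia

theorem intCast_add_ne_zero_of_mem_Ioo {t : ℝ} (ht : t ∈ Set.Ioo (0 : ℝ) 1) (m : ℤ) :
    (m : ℝ) + t ≠ 0 := by
  intro h
  have hlt : (-1 : ℝ) < m := by linarith [ht.2]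
  have hgt : (m : ℝ) < 0 := by linarith [ht.1]
  norm_cast at hlt hgt
  lia

theorem neg_eight_add_two_mul_pi_sq_div_six_neg : -8 + 2 * (Real.pi ^ 2 / 6) < 0 := by
  nlinarith [Real.pi_lt_d2, Real.pi_pos]

theorem deriv_neg_case_general {s : Finset ℤ} (h0 : 0 ∉ s) (h1 : -1 ∉ s) {δ : ℤ → ℝ}
    (hδ : ∀ m ∈ s, -1 ≤ δ m) {t : ℝ} (ht : t ∈ Set.Ioo (0 : ℝ) 1) :
    deriv (fun u : ℝ => 1 / u - 1 / (1 - u) + ∑ m ∈ s, δ m / ((m : ℝ) + u)) t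
        ≤ -8 + 2 * (Real.pi ^ 2 / 6) ∧
      (-8 + 2 * (Real.pi ^ 2 / 6) : ℝ) < 0 := by
  refine ⟨?_, neg_eight_add_two_mul_pi_sq_div_six_neg⟩
  have hderiv := (hasDerivAt_one_div_sub_one_div_one_sub ht.1.ne' ht.2.ne).fun_add
    (hasDerivAt_sum_div_const_add (s := s) δ (fun m : ℤ => (m : ℝ))
      fun m _ => intCast_add_ne_zero_of_mem_Ioo ht m)
  have hpoles : 8 ≤ 1 / t ^ 2 + 1 / (1 - t) ^ 2 := by
    simpa using eight_div_add_sq_le ht.1 (sub_pos.mpr ht.2)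
  have hsum : ∑ m ∈ s, -δ m / ((m : ℝ) + t) ^ 2 ≤ 2 * (Real.pi ^ 2 / 6) := by
    refine (Finset.sum_le_sum fun m hm => ?_).trans
      (sum_one_div_intCast_add_sq_le h0 h1 (Set.Ioo_subset_Icc_self ht))
    gcongr
    exact neg_le.mpr (hδ m hm)
  rw [hderiv.deriv]
  exact add_le_add (neg_le_neg hpoles) hsum

/-- For `M ≥ 2` and any signs `δ_m ∈ {±1}` (for `m ≠ 0, -1`, `|m| ≤ M`),
the function `h(t) = 1/t - 1/(1-t) + ∑_{m ≠ 0,-1, |m| ≤ M} δ_m/(m+t)` satisfies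
`h'(t) ≤ -8 + 2ζ(2) < 0` for every `t ∈ (0,1)`, where `ζ(2) = π²/6`. -/
theorem deriv_neg_case (M : ℕ) (hM : 2 ≤ M) (δ : ℤ → ℝ)
    (hδ : ∀ m : ℤ, m ≠ 0 → m ≠ -1 → |m| ≤ (M : ℤ) → δ m = 1 ∨ δ m = -1) :
    ∀ t ∈ Set.Ioo (0 : ℝ) 1,
      deriv (fun u : ℝ => 1 / u - 1 / (1 - u) +
          ∑ m ∈ Finset.Icc (-(M : ℤ)) (M : ℤ) \ {0, -1}, δ m / ((m : ℝ) + u)) t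
        ≤ -8 + 2 * (Real.pi ^ 2 / 6) ∧
      (-8 + 2 * (Real.pi ^ 2 / 6) : ℝ) < 0 := by
  refine fun t ht => deriv_neg_case_general (by simp) (by simp) (fun m hm => ?_) ht
  simp only [Finset.mem_sdiff, Finset.mem_Icc, Finset.mem_insert, Finset.mem_singleton,
    not_or] at hm
  rcases hδ m hm.2.1 hm.2.2 (abs_le.mpr hm.1) with h | h <;> rw [h]
  norm_num

end
end
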